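/- arXiv:1604.05267 — 3 statements merged into one kernel-verified Lean document; each statement's English description precedes it below -/
import Mathlib

section
/- Let k ≥ 2 be an integer and f : (0,∞) → [0,∞). Then f is k-Stieltjes (f ∈ S_k) if and only if there exist a real number a ≥ 0 and a nonnegative Borel measure μ on [0,∞) with ∫_{[0,∞)} (1+t)^{-1} μ(dt) < ∞ such that f(x) = a + ∫_{[0,∞)} Φ_{k-1}(x,t) μ(dt) for every x > 0. -/
open Set MeasureTheory Filter

noncomputable def Pk (k : ℕ) (x : ℝ) : ℝ :=
  ∑ n ∈ Finset.range (k + 1), ((2 * k).choose (n + k) : ℝ) * (-x) ^ n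

noncomputable def Pkhat (k : ℕ) (x : ℝ) : ℝ :=
  Pk k x - ((2 * k).choose k : ℝ)

/-- The kernel `Φ_k(x,t)`. -/
noncomputable def Phi (k : ℕ) (x t : ℝ) : ℝ :=
  x⁻¹ * (if t ≤ x then Pk k (t / x) else -Pkhat k (x / t))

/-- The function `ψ_k`. -/
noncomputable def psiK (k : ℕ) (y : ℝ) : ℝ :=
  if 1 ≤ y then Pk k y⁻¹ else -Pkhat k y

/-- `f` is a `k`-Stieltjes function on `(0,∞)` (for `k ≥ 2`). -/
def IsStieltjesK (k : ℕ) (f : ℝ → ℝ) : Prop :=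
  (∀ x > 0, 0 ≤ f x) ∧
  ContDiffOn ℝ (2 * k - 3 : ℕ) f (Ioi 0) ∧
  (∀ n, 1 ≤ n → n ≤ k - 1 → ∀ x > 0,
    0 ≤ (-1 : ℝ) ^ (n - 1) * iteratedDeriv (2 * n - 1) (fun y => y ^ n * f y) x) ∧
  ConvexOn ℝ (Ioi 0)
    (fun x => (-1 : ℝ) ^ (k - 1) * iteratedDeriv (2 * k - 3) (fun y => y ^ k * f y) x)

/-- `g` is `k`-monotone on the open interval `I`. -/
def KMonotoneOn (k : ℕ) (g : ℝ → ℝ) (I : Set ℝ) : Prop :=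
  if k = 1 then (∀ x ∈ I, 0 ≤ g x) ∧ AntitoneOn g I
  else
    ContDiffOn ℝ (k - 2 : ℕ) g I ∧
    ∀ n ≤ k - 2,
      (∀ x ∈ I, 0 ≤ (-1 : ℝ) ^ n * iteratedDeriv n g x) ∧
      AntitoneOn (fun x => (-1 : ℝ) ^ n * iteratedDeriv n g x) I ∧
      ConvexOn ℝ I (fun x => (-1 : ℝ) ^ n * iteratedDeriv n g x)

/-- `v(w) = (w + √(w²−4))/2`. -/
noncomputable def vOf (w : ℝ) : ℝ := (w + Real.sqrt (w ^ 2 - 4)) / 2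

/-- `F_u(w) = f(uv) f(u/v)`. -/
noncomputable def Fu (f : ℝ → ℝ) (u w : ℝ) : ℝ := f (u * vOf w) * f (u / vOf w)

/-- `f` is `k`-hyperbolically monotone. -/
def IsHMk (k : ℕ) (f : ℝ → ℝ) : Prop :=
  (∀ x > 0, 0 ≤ f x) ∧ ∀ u > 0, KMonotoneOn k (Fu f u) (Ioi 2)

/-- `f` is power regular `k`-hyperbolically monotone. -/
def IsPRHMk (k : ℕ) (f : ℝ → ℝ) : Prop :=
  ∀ p > 0, IsHMk k (fun x => f x ^ p)

/-- `ψ_f(x) = -x (log f)'(x)`. -/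
noncomputable def psiF (f : ℝ → ℝ) (x : ℝ) : ℝ := -x * deriv (fun y => Real.log (f y)) x

/-- `Δ_u(f)`. -/
noncomputable def DeltaU (f : ℝ → ℝ) (u w : ℝ) : ℝ :=
  (psiF f (u * vOf w) - psiF f (u / vOf w)) / (vOf w - (vOf w)⁻¹)

/-- `Δ_{k,u}`. -/
noncomputable def DeltaKU (k : ℕ) (u w : ℝ) : ℝ :=
  (psiK k (u * vOf w) - psiK k (u / vOf w)) / (vOf w - (vOf w)⁻¹)

/-!
In the variable `s = log x`, put `u(s) = e^s f(e^s)`. The derivative conditions on `f` say that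
`g_n = D ∏_{j=1}^n (j² - D²) u` is nonnegative for `n ≤ k - 2`, and the convexity condition says
that the distribution `D ∏_{j=1}^{k-1} (j² - D²) u` is a nonnegative measure `σ`. Up to
normalisation, `ψ_n` in the variable `s` is the fundamental solution of `D ∏_{j=1}^n (j² - D²)`:
it is obtained from the Heaviside function `ψ_0` by convolving successively with the Green kernels
of `j² - D²`. A nonnegative solution of `(j² - D²) g = ν` is the Green potential of `ν` plus
`A e^{js} + B e^{-js}` with `A, B ≥ 0`. Since `ψ_n(e^s)` is bounded below by a multiple of
`min(1, e^s)` for `n ≥ 1`, all these exponentials would make the potentials of the previous levels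
infinite, except for `A e^s` at `j = 1`. That one gives the constant `a`, the limit of `u` at `-∞`
gives the atom of `μ` at `0`, and `σ` gives the rest of `μ`. Conversely, the representation is
differentiated one Green kernel at a time.
-/

/-! ### The Green kernel of `m² - D²` on the line -/

section Green

open Real Topology

/-- The Green kernel `e^{-m|s-r|} / (2m)` of the operator `m² - D²` on the line. -/
noncomputable def greenKernel (m s r : ℝ) : ℝ := exp (-(m * |s - r|)) / (2 * m)

/-- The Green potential of `ν`, the decaying solution of `(m² - D²) g = ν`. It takes values in
`ℝ≥0∞`, so that it makes sense for every measure. -/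
noncomputable def greenPotential (m : ℝ) (ν : Measure ℝ) (s : ℝ) : ENNReal :=
  ∫⁻ r, ENNReal.ofReal (greenKernel m s r) ∂ν

/-- `g` is a weak solution of `(m² - D²) g = ν`. Since
`(m² - D²) g = -e^{ms} D (e^{-2ms} D (e^{ms} g))`, the equation is encoded by the first integral
`R = e^{-2ms} D (e^{ms} g)`, which has to satisfy `-dR = e^{-ms} dν`. -/
structure HelmholtzSolution (m : ℝ) (g R : ℝ → ℝ) (ν : Measure ℝ) : Prop where
  antitone : Antitone R
  integral_eq : ∀ ⦃a b : ℝ⦄, a ≤ b →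
    exp (m * b) * g b - exp (m * a) * g a = ∫ s in a..b, exp (2 * m * s) * R s
  lintegral_Ioc : ∀ ⦃a b : ℝ⦄, a ≤ b →
    ∫⁻ r in Ioc a b, ENNReal.ofReal (exp (-(m * r))) ∂ν = ENNReal.ofReal (R a - R b)

variable {m b c : ℝ} {g g' G R : ℝ → ℝ} {ν : Measure ℝ}

lemma greenKernel_nonneg (hm : 0 < m) (s r : ℝ) : 0 ≤ greenKernel m s r := by
  unfold greenKernel; positivity

@[fun_prop]
lemma continuous_greenKernel (m s : ℝ) : Continuous (greenKernel m s) := by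
  unfold greenKernel; fun_prop

lemma exp_mul_greenKernel (m s r : ℝ) :
    exp (m * s) * greenKernel m s r = exp (2 * m * min s r) / (2 * m) * exp (-(m * r)) := by
  rw [greenKernel, mul_div_assoc', div_mul_eq_mul_div, ← exp_add, ← exp_add]
  congr 2
  rcases le_total s r with h | h
  · rw [min_eq_left h, abs_of_nonpos (by linarith)]; ring
  · rw [min_eq_right h, abs_of_nonneg (by linarith)]; ring

lemma lintegral_exp_neg_Ioi_ne_top (hm : 0 < m) {s : ℝ} (h : greenPotential m ν s ≠ ⊤) :
    ∫⁻ r in Ioi s, ENNReal.ofReal (exp (-(m * r))) ∂ν ≠ ⊤ := by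
  refine ne_top_of_le_ne_top
    (ENNReal.mul_ne_top (ENNReal.ofReal_ne_top (r := 2 * m * exp (-(m * s)))) h) ?_
  rw [greenPotential, ← lintegral_const_mul _ (by fun_prop)]
  refine (setLIntegral_mono' measurableSet_Ioi fun r (hr : s < r) => ?_).trans
    (setLIntegral_le_lintegral _ _)
  rw [← ENNReal.ofReal_mul (by positivity), greenKernel, abs_of_neg (sub_neg.2 hr),
    mul_div_assoc', mul_assoc, ← exp_add, mul_div_cancel_left₀ _ (by positivity)]
  exact ENNReal.ofReal_le_ofReal (exp_le_exp.2 (le_of_eq (by ring)))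

lemma lintegral_exp_mul_Iic (hm : 0 < m) (s : ℝ) :
    ∫⁻ r in Iic s, ENNReal.ofReal (exp (m * r)) = ENNReal.ofReal (exp (m * s) / m) := by
  rw [← integral_exp_mul_Iic hm, ofReal_integral_eq_lintegral_ofReal
    (integrableOn_exp_mul_Iic hm _) (Eventually.of_forall fun r => (exp_pos _).le)]

lemma lintegral_exp_mul_indicator_Iio (hm : 0 < m) (s t : ℝ) :
    ∫⁻ r in Iic s, (Iio t).indicator (fun r => ENNReal.ofReal (exp (m * r))) r
      = ENNReal.ofReal (exp (m * min s t) / m) := by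
  rw [lintegral_indicator measurableSet_Iio, Measure.restrict_restrict measurableSet_Iio,
    Measure.restrict_congr_set (Iio_ae_eq_Iic.inter (ae_eq_refl (Iic s))), Iic_inter_Iic,
    min_comm, lintegral_exp_mul_Iic hm]

lemma lintegral_exp_mul_tail [SFinite ν] (hm : 0 < m) (s : ℝ) :
    ∫⁻ r in Iic s, ENNReal.ofReal (exp (2 * m * r)) *
        ∫⁻ t in Ioi r, ENNReal.ofReal (exp (-(m * t))) ∂ν
      = ENNReal.ofReal (exp (m * s)) * greenPotential m ν s := by
  have fiber (r t : ℝ) : (Ioi r).indicator (fun t => ENNReal.ofReal (exp (2 * m * r)) *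
      ENNReal.ofReal (exp (-(m * t)))) t
      = (Iio t).indicator (fun r => ENNReal.ofReal (exp (2 * m * r))) r *
        ENNReal.ofReal (exp (-(m * t))) := by
    by_cases h : r < t <;> simp [h]
  calc ∫⁻ r in Iic s, ENNReal.ofReal (exp (2 * m * r)) *
        ∫⁻ t in Ioi r, ENNReal.ofReal (exp (-(m * t))) ∂ν
      = ∫⁻ r in Iic s, ∫⁻ t, (Iio t).indicator (fun r => ENNReal.ofReal (exp (2 * m * r))) r *
          ENNReal.ofReal (exp (-(m * t))) ∂ν := by
        refine lintegral_congr fun r => ?_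
        simp_rw [← fiber]
        rw [lintegral_indicator measurableSet_Ioi, lintegral_const_mul _ (by fun_prop)]
    _ = ∫⁻ t, (∫⁻ r in Iic s, (Iio t).indicator (fun r => ENNReal.ofReal (exp (2 * m * r))) r) *
          ENNReal.ofReal (exp (-(m * t))) ∂ν := by
        rw [lintegral_lintegral_swap]
        · exact lintegral_congr fun t =>
            lintegral_mul_const _ ((by fun_prop : Measurable _).indicator measurableSet_Iio)
        · refine (Measurable.mul ?_ (by fun_prop)).aemeasurable
          exact (by fun_prop : Measurable fun p : ℝ × ℝ => ENNReal.ofReal (exp (2 * m * p.1)))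
            |>.indicator (measurableSet_lt measurable_fst measurable_snd)
    _ = _ := by
        rw [greenPotential, ← lintegral_const_mul _ (by fun_prop)]
        refine lintegral_congr fun t => ?_
        rw [lintegral_exp_mul_indicator_Iio (by positivity), ← ENNReal.ofReal_mul (by positivity),
          ← ENNReal.ofReal_mul (by positivity), exp_mul_greenKernel]

lemma lintegral_Ioc_ofReal {φ : ℝ → ℝ} {a b : ℝ} (hab : a ≤ b) (hφ : ∀ x, 0 ≤ φ x)
    (hi : IntervalIntegrable φ volume a b) :
    ∫⁻ x in Ioc a b, ENNReal.ofReal (φ x) = ENNReal.ofReal (∫ x in a..b, φ x) := by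
  rw [intervalIntegral.integral_of_le hab, ofReal_integral_eq_lintegral_ofReal
    ((intervalIntegrable_iff_integrableOn_Ioc_of_le hab).1 hi) (Eventually.of_forall hφ)]

lemma lintegral_Ioc_withDensity_ofReal {φ : ℝ → ℝ} {a b : ℝ} (hab : a ≤ b) (hφ : Continuous φ)
    (hφ0 : ∀ s, 0 ≤ φ s) (hG : Measurable G) (hG0 : ∀ s, 0 ≤ G s)
    (hGi : IntervalIntegrable G volume a b) :
    ∫⁻ r in Ioc a b, ENNReal.ofReal (φ r) ∂(volume.withDensity fun r => ENNReal.ofReal (G r))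
      = ENNReal.ofReal (∫ r in a..b, φ r * G r) := by
  rw [← lintegral_Ioc_ofReal hab (fun r => mul_nonneg (hφ0 r) (hG0 r))
    (hGi.continuousOn_mul hφ.continuousOn), restrict_withDensity measurableSet_Ioc,
    lintegral_withDensity_eq_lintegral_mul _ hG.ennreal_ofReal (by fun_prop)]
  refine lintegral_congr fun r => ?_
  rw [Pi.mul_apply, ENNReal.ofReal_mul (hφ0 r), mul_comm]

lemma lintegral_Iic_ofReal_of_tendsto {h φ : ℝ → ℝ} (hφ : ∀ x, 0 ≤ φ x)
    (hi : ∀ a b, IntervalIntegrable φ volume a b)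
    (hh : ∀ ⦃a b⦄, a ≤ b → h b - h a = ∫ x in a..b, φ x)
    (hc : Tendsto h atBot (𝓝 c)) (s : ℝ) :
    ∫⁻ x in Iic s, ENNReal.ofReal (φ x) = ENNReal.ofReal (h s - c) := by
  have hlim : Tendsto (fun a => ∫ x in a..s, φ x) atBot (𝓝 (h s - c)) := by
    refine (tendsto_const_nhds.sub hc).congr' ?_
    filter_upwards [eventually_le_atBot s] with a ha using hh ha
  have hint : IntegrableOn φ (Iic s) := by
    refine integrableOn_Iic_of_intervalIntegral_norm_tendsto (h s - c) s
      (fun a => (hi a s).1) tendsto_id (hlim.congr fun a => ?_)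
    simp only [norm_eq_abs, abs_of_nonneg (hφ _)]
  rw [← ofReal_integral_eq_lintegral_ofReal hint (Eventually.of_forall hφ),
    tendsto_nhds_unique (intervalIntegral_tendsto_integral_Iic s hint tendsto_id) hlim]

lemma intervalIntegrable_exp_mul_antitone (hR : Antitone R) (m a b : ℝ) :
    IntervalIntegrable (fun s => exp (m * s) * R s) volume a b :=
  hR.intervalIntegrable.continuousOn_mul (by fun_prop)

namespace HelmholtzSolution

lemma isLocallyFiniteMeasure (h : HelmholtzSolution m g R ν) (hm : 0 < m) :
    IsLocallyFiniteMeasure ν := by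
  refine ⟨fun x => ⟨Ioc (x - 1) (x + 1), Ioc_mem_nhds (by simp) (by simp), ?_⟩⟩
  calc ν (Ioc (x - 1) (x + 1))
      ≤ ∫⁻ r in Ioc (x - 1) (x + 1), ENNReal.ofReal (exp (m * (x + 1))) *
          ENNReal.ofReal (exp (-(m * r))) ∂ν := by
        rw [← setLIntegral_one]
        refine setLIntegral_mono' measurableSet_Ioc fun r hr => ?_
        rw [← ENNReal.ofReal_mul (exp_pos _).le, ← exp_add, ENNReal.one_le_ofReal, one_le_exp_iff]
        nlinarith [hr.2]
    _ < ⊤ := by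
        rw [lintegral_const_mul _ (by fun_prop), h.lintegral_Ioc (by linarith)]
        exact ENNReal.mul_lt_top ENNReal.ofReal_lt_top ENNReal.ofReal_lt_top

lemma lintegral_Ioi (h : HelmholtzSolution m g R ν) (hb : Tendsto R atTop (𝓝 b)) (r : ℝ) :
    ∫⁻ t in Ioi r, ENNReal.ofReal (exp (-(m * t))) ∂ν = ENNReal.ofReal (R r - b) := by
  have hlim := tendsto_measure_iUnion_atTop
    (μ := ν.withDensity fun t => ENNReal.ofReal (exp (-(m * t)))) (s := fun a => Ioc r a)
    fun _ _ hab => Ioc_subset_Ioc_right hab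
  rw [iUnion_Ioc_right, withDensity_apply _ measurableSet_Ioi] at hlim
  refine tendsto_nhds_unique hlim
    ((ENNReal.tendsto_ofReal (tendsto_const_nhds.sub hb)).congr' ?_)
  filter_upwards [eventually_ge_atTop r] with a ha
  rw [Function.comp, withDensity_apply _ measurableSet_Ioc, h.lintegral_Ioc ha]

lemma monotone_exp_mul (h : HelmholtzSolution m g R ν) (hR : ∀ s, 0 ≤ R s) :
    Monotone fun s => exp (m * s) * g s := fun a b hab => by
  have := intervalIntegral.integral_nonneg (μ := volume) hab
    fun s _ => mul_nonneg (exp_pos (2 * m * s)).le (hR s)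
  rw [← h.integral_eq hab] at this
  exact sub_nonneg.1 this

theorem eq_add_greenPotential_of_tendsto (h : HelmholtzSolution m g R ν) (hm : 0 < m)
    (hb : Tendsto R atTop (𝓝 b)) (hb0 : 0 ≤ b)
    (hc : Tendsto (fun s => exp (m * s) * g s) atBot (𝓝 c)) (hc0 : 0 ≤ c) (s : ℝ) :
    0 ≤ g s ∧ ENNReal.ofReal (g s) = ENNReal.ofReal (c * exp (-(m * s))) +
      ENNReal.ofReal (b / (2 * m) * exp (m * s)) + greenPotential m ν s := by
  have := h.isLocallyFiniteMeasure hm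
  have hRb (r) : b ≤ R r := h.antitone.le_of_tendsto hb r
  have hR0 (r) : 0 ≤ R r := hb0.trans (hRb r)
  have hcs : c ≤ exp (m * s) * g s := (h.monotone_exp_mul hR0).le_of_tendsto hc s
  refine ⟨nonneg_of_mul_nonneg_right (hc0.trans hcs) (exp_pos _), ?_⟩
  have split (r) : ENNReal.ofReal (exp (2 * m * r) * R r)
      = ENNReal.ofReal b * ENNReal.ofReal (exp (2 * m * r)) + ENNReal.ofReal (exp (2 * m * r)) *
        ∫⁻ t in Ioi r, ENNReal.ofReal (exp (-(m * t))) ∂ν := by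
    rw [h.lintegral_Ioi hb, ← ENNReal.ofReal_mul hb0, ← ENNReal.ofReal_mul (exp_pos _).le,
      ← ENNReal.ofReal_add (by positivity) (mul_nonneg (exp_pos _).le (sub_nonneg.2 (hRb r)))]
    ring_nf
  have key := lintegral_Iic_ofReal_of_tendsto (fun r => mul_nonneg (exp_pos _).le (hR0 r))
    (intervalIntegrable_exp_mul_antitone h.antitone (2 * m)) h.integral_eq hc s
  simp_rw [split] at key
  rw [lintegral_add_left (by fun_prop), lintegral_const_mul _ (by fun_prop),
    lintegral_exp_mul_tail hm, lintegral_exp_mul_Iic (by positivity)] at key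
  have hexp_cancel : exp (-(m * s)) * exp (m * s) = 1 := by rw [← exp_add]; simp
  have hexp_sq : exp (2 * m * s) = exp (m * s) * exp (m * s) := by rw [← exp_add]; ring_nf
  calc ENNReal.ofReal (g s)
      = ENNReal.ofReal (c * exp (-(m * s))) +
          ENNReal.ofReal (exp (-(m * s))) * ENNReal.ofReal (exp (m * s) * g s - c) := by
        rw [← ENNReal.ofReal_mul (exp_pos _).le, ← ENNReal.ofReal_add (by positivity)
          (mul_nonneg (exp_pos _).le (sub_nonneg.2 hcs))]
        congr 1
        linear_combination -g s * hexp_cancel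
    _ = _ := by
        rw [← key, mul_add, ← mul_assoc (ENNReal.ofReal _) _ (greenPotential m ν s),
          ← ENNReal.ofReal_mul hb0, ← ENNReal.ofReal_mul (exp_pos _).le,
          ← ENNReal.ofReal_mul (exp_pos _).le, hexp_cancel, ENNReal.ofReal_one, one_mul, add_assoc]
        congr 3
        rw [hexp_sq]
        linear_combination b * exp (m * s) / (2 * m) * hexp_cancel

lemma firstIntegral_nonneg (h : HelmholtzSolution m g R ν) (hm : 0 < m) (hg : ∀ s, 0 ≤ g s)
    (s : ℝ) : 0 ≤ R s := by
  by_contra! hneg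
  have hslope : exp (2 * m * s) * R s < 0 := mul_neg_of_pos_of_neg (exp_pos _) hneg
  have hle (t) (ht : s ≤ t) :
      exp (m * t) * g t ≤ exp (m * s) * g s + (t - s) * (exp (2 * m * s) * R s) := by
    have hmono := intervalIntegral.integral_mono_on (μ := volume) (g := fun _ =>
      exp (2 * m * s) * R s) ht (intervalIntegrable_exp_mul_antitone h.antitone (2 * m) s t)
      (by simp) fun r hr => by
        have hexp : exp (2 * m * s) ≤ exp (2 * m * r) := exp_le_exp.2 (by nlinarith [hr.1])
        nlinarith [h.antitone hr.1, exp_pos (2 * m * s)]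
    rw [intervalIntegral.integral_const, smul_eq_mul, ← h.integral_eq ht] at hmono
    linarith
  have hbot : Tendsto (fun t => exp (m * s) * g s + (t - s) * (exp (2 * m * s) * R s))
      atTop atBot :=
    tendsto_atBot_add_const_left _ _
      ((tendsto_atTop_add_const_right _ _ tendsto_id).atTop_mul_const_of_neg hslope)
  obtain ⟨t, ht, hst⟩ := ((hbot.eventually_lt_atBot 0).and (eventually_ge_atTop s)).exists
  exact absurd ((hle t hst).trans_lt ht) (not_lt.2 (mul_nonneg (exp_pos _).le (hg t)))

theorem exists_eq_add_greenPotential (h : HelmholtzSolution m g R ν) (hm : 0 < m)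
    (hg : ∀ s, 0 ≤ g s) :
    ∃ A B : ℝ, 0 ≤ A ∧ 0 ≤ B ∧ ∀ s, ENNReal.ofReal (g s) =
      ENNReal.ofReal (B * exp (-(m * s))) + ENNReal.ofReal (A * exp (m * s)) +
        greenPotential m ν s := by
  have hR0 := h.firstIntegral_nonneg hm hg
  have hh0 (s) : 0 ≤ exp (m * s) * g s := mul_nonneg (exp_pos _).le (hg s)
  have hb := tendsto_atTop_ciInf h.antitone ⟨0, forall_mem_range.2 hR0⟩
  have hc := tendsto_atBot_ciInf (h.monotone_exp_mul hR0) ⟨0, forall_mem_range.2 hh0⟩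
  have hb0 : 0 ≤ ⨅ s, R s := le_ciInf hR0
  exact ⟨_, _, by positivity, le_ciInf hh0,
    fun s => (h.eq_add_greenPotential_of_tendsto hm hb hb0 hc (le_ciInf hh0) s).2⟩

lemma add_exp (h : HelmholtzSolution m g R ν) (a : ℝ) :
    HelmholtzSolution m (fun s => g s + a * exp (m * s)) (fun s => R s + 2 * m * a) ν where
  antitone := h.antitone.add_const _
  integral_eq x y hxy := by
    have hexp : ∫ s in x..y, exp (2 * m * s) * (2 * m * a)
        = a * exp (2 * m * y) - a * exp (2 * m * x) := by
      refine intervalIntegral.integral_eq_sub_of_hasDerivAt (f := fun s => a * exp (2 * m * s))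
        (fun s _ => ?_) (Continuous.intervalIntegrable (by fun_prop) _ _)
      exact ((((hasDerivAt_id s).const_mul (2 * m)).exp).const_mul a).congr_deriv (by simp; ring)
    simp_rw [mul_add]
    rw [intervalIntegral.integral_add
      (intervalIntegrable_exp_mul_antitone h.antitone (2 * m) x y)
      (Continuous.intervalIntegrable (by fun_prop) _ _), hexp, ← h.integral_eq hxy,
      show 2 * m * y = m * y + m * y by ring, show 2 * m * x = m * x + m * x by ring, exp_add,
      exp_add]
    ring
  lintegral_Ioc x y hxy := by rw [h.lintegral_Ioc hxy, add_sub_add_right_eq_sub]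

lemma exp_mul_eq_add_integral (h : HelmholtzSolution m g R ν) (s : ℝ) :
    exp (m * s) * g s = exp (m * 0) * g 0 + ∫ t in 0..s, exp (2 * m * t) * R t := by
  rcases le_total 0 s with hs | hs
  · rw [← h.integral_eq hs, add_sub_cancel]
  · rw [intervalIntegral.integral_symm, ← h.integral_eq hs, neg_sub, add_sub_cancel]

lemma continuous (h : HelmholtzSolution m g R ν) : Continuous g := by
  have hcont : Continuous fun s => exp (m * s) * g s := by
    rw [funext h.exp_mul_eq_add_integral]
    exact continuous_const.add (intervalIntegral.continuous_primitive
      (intervalIntegrable_exp_mul_antitone h.antitone (2 * m)) 0)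
  have hg : g = fun s => exp (-(m * s)) * (exp (m * s) * g s) := by
    funext s; rw [← mul_assoc, ← exp_add]; simp
  rw [hg]
  fun_prop

lemma continuousWithinAt_firstIntegral (h : HelmholtzSolution m g R ν) (s : ℝ) :
    ContinuousWithinAt R (Ioi s) s := by
  have hlim := tendsto_measure_biInter_gt (a := s) (s := fun r => Ioc s r)
    (μ := ν.withDensity fun r => ENNReal.ofReal (exp (-(m * r))))
    (fun r _ => measurableSet_Ioc.nullMeasurableSet) (fun i j _ hij => Ioc_subset_Ioc_right hij)
    ⟨s + 1, lt_add_one s, by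
      rw [withDensity_apply _ measurableSet_Ioc, h.lintegral_Ioc (by simp)]
      exact ENNReal.ofReal_ne_top⟩
  have hinter : ⋂ r > s, Ioc s r = ∅ := by
    refine eq_empty_of_forall_notMem fun x hx => ?_
    simp only [mem_iInter] at hx
    obtain ⟨r, hsr, hrx⟩ := exists_between (hx (s + 1) (lt_add_one s)).1
    exact hrx.not_ge (hx r hsr).2
  rw [hinter, measure_empty] at hlim
  have hsub : Tendsto (fun r => R s - (R s - R r)) (𝓝[>] s) (𝓝 (R s - 0)) := by
    refine tendsto_const_nhds.sub
      (((ENNReal.tendsto_toReal ENNReal.zero_ne_top).comp hlim).congr' ?_)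
    filter_upwards [self_mem_nhdsWithin] with r (hr : s < r)
    rw [Function.comp, Function.comp, withDensity_apply _ measurableSet_Ioc, h.lintegral_Ioc hr.le,
      ENNReal.toReal_ofReal (sub_nonneg.2 (h.antitone hr.le))]
  simp only [sub_sub_cancel, sub_zero] at hsub
  exact hsub

theorem hasDerivWithinAt_exp_mul (h : HelmholtzSolution m g R ν) (s : ℝ) :
    HasDerivWithinAt (fun s => exp (m * s) * g s) (exp (2 * m * s) * R s) (Ioi s) s := by
  have hii := intervalIntegrable_exp_mul_antitone h.antitone (2 * m)
  have hmeas : Measurable fun t => exp (2 * m * t) * R t :=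
    (by fun_prop : Measurable fun t : ℝ => exp (2 * m * t)).mul h.antitone.measurable
  refine HasDerivWithinAt.congr (HasDerivWithinAt.const_add (exp (m * 0) * g 0) ?_)
    (fun t _ => h.exp_mul_eq_add_integral t) (h.exp_mul_eq_add_integral s)
  exact (intervalIntegral.integral_hasDerivWithinAt_right (hii 0 s) (s := Ici s) (t := Ioi s)
    hmeas.stronglyMeasurable.stronglyMeasurableAtFilter
    ((by fun_prop : Continuous fun t : ℝ => exp (2 * m * t)).continuousWithinAt.mul
      (h.continuousWithinAt_firstIntegral s))).mono Ioi_subset_Ici_self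

theorem hasDerivAt (h : HelmholtzSolution m g R ν) (hR : Continuous R) (s : ℝ) :
    HasDerivAt g (exp (m * s) * R s - m * g s) s := by
  have hexp : HasDerivAt (fun s => exp (m * s) * g s) (exp (2 * m * s) * R s) s := by
    refine HasDerivAt.congr_of_eventuallyEq (HasDerivAt.const_add (exp (m * 0) * g 0) ?_)
      (Eventually.of_forall h.exp_mul_eq_add_integral)
    have hc : Continuous fun t => exp (2 * m * t) * R t := by fun_prop
    exact intervalIntegral.integral_hasDerivAt_right (hc.intervalIntegrable _ _)
      (hc.stronglyMeasurableAtFilter _ _) hc.continuousAt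
  have hprod := ((hasDerivAt_id s).const_mul (-m)).exp.mul hexp
  refine (hprod.congr_deriv ?_).congr_of_eventuallyEq (Eventually.of_forall fun t => ?_)
  · have hcancel : exp (-m * s) * exp (m * s) = 1 := by rw [← exp_add]; simp
    rw [show 2 * m * s = m * s + m * s by ring, exp_add]
    simp only [id]
    linear_combination (exp (m * s) * R s - m * g s) * hcancel
  · simp [← mul_assoc, ← exp_add]

theorem of_hasDerivWithinAt (hg : Continuous g) (hg' : Continuous g')
    (hd : ∀ s, HasDerivWithinAt g (g' s) (Ioi s) s)
    (hd' : ∀ s, HasDerivWithinAt g' (m ^ 2 * g s - G s) (Ioi s) s)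
    (hG0 : ∀ s, 0 ≤ G s) (hGm : Measurable G) (hGi : ∀ a b, IntervalIntegrable G volume a b) :
    HelmholtzSolution m g (fun s => exp (-(m * s)) * (m * g s + g' s))
      (volume.withDensity fun r => ENNReal.ofReal (G r)) := by
  have hexp (c s : ℝ) : HasDerivWithinAt (fun s => exp (c * s)) (exp (c * s) * c) (Ioi s) s := by
    simpa using ((hasDerivAt_id s).const_mul c).exp.hasDerivWithinAt
  have hint {a b : ℝ} (hab : a ≤ b) : ∫ s in a..b, exp (-(m * s)) * G s
      = exp (-(m * a)) * (m * g a + g' a) - exp (-(m * b)) * (m * g b + g' b) := by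
    rw [← neg_inj, ← intervalIntegral.integral_neg, neg_sub]
    refine intervalIntegral.integral_eq_sub_of_hasDeriv_right_of_le
      (f := fun s => exp (-(m * s)) * (m * g s + g' s)) hab (by fun_prop) (fun s _ => ?_)
      ((hGi a b).continuousOn_mul (by fun_prop)).neg
    have := (hexp (-m) s).mul (((hd s).const_mul m).add (hd' s))
    simp only [neg_mul] at this
    refine this.congr_deriv ?_
    simp only [Pi.add_apply]
    ring
  refine ⟨fun a b hab => ?_, fun a b hab => ?_, fun a b hab => ?_⟩
  · rw [← sub_nonneg, ← hint hab]
    exact intervalIntegral.integral_nonneg hab fun s _ => mul_nonneg (exp_pos _).le (hG0 s)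
  · refine (intervalIntegral.integral_eq_sub_of_hasDeriv_right_of_le
      (f := fun s => exp (m * s) * g s) hab (by fun_prop) (fun s _ => ?_)
      (Continuous.intervalIntegrable (by fun_prop) _ _)).symm
    refine ((hexp m s).mul (hd s)).congr_deriv ?_
    rw [← mul_assoc, ← exp_add, show 2 * m * s + -(m * s) = m * s by ring]
    ring
  · rw [lintegral_Ioc_withDensity_ofReal hab (by fun_prop) (fun r => (exp_pos _).le) hGm hG0
      (hGi a b), hint hab]

lemma hasDerivAt_firstIntegral
    (h : HelmholtzSolution m g R (volume.withDensity fun r => ENNReal.ofReal (G r)))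
    (hG0 : ∀ s, 0 ≤ G s) (hG : Continuous G) (s : ℝ) :
    HasDerivAt R (-(exp (-(m * s)) * G s)) s := by
  have hsub {a b : ℝ} (hab : a ≤ b) : R a - R b = ∫ r in a..b, exp (-(m * r)) * G r := by
    have := h.lintegral_Ioc hab
    rwa [lintegral_Ioc_withDensity_ofReal hab (by fun_prop) (fun r => (exp_pos _).le)
      hG.measurable hG0 (hG.intervalIntegrable a b), eq_comm,
      ENNReal.ofReal_eq_ofReal_iff (sub_nonneg.2 (h.antitone hab))
        (intervalIntegral.integral_nonneg hab fun r _ => mul_nonneg (exp_pos _).le (hG0 r))]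
      at this
  have hR (s) : R s = R 0 - ∫ r in 0..s, exp (-(m * r)) * G r := by
    rcases le_total 0 s with hs | hs
    · rw [← hsub hs]; ring
    · rw [intervalIntegral.integral_symm, ← hsub hs]; ring
  have hc : Continuous fun r => exp (-(m * r)) * G r := by fun_prop
  exact ((intervalIntegral.integral_hasDerivAt_right (hc.intervalIntegrable _ _)
    (hc.stronglyMeasurableAtFilter _ _) hc.continuousAt).const_sub (R 0)).congr_of_eventuallyEq
    (Eventually.of_forall hR)

theorem exists_hasDerivAt_of_continuous_density
    (h : HelmholtzSolution m g R (volume.withDensity fun r => ENNReal.ofReal (G r)))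
    (hG0 : ∀ s, 0 ≤ G s) (hG : Continuous G) :
    ∃ g' : ℝ → ℝ, (∀ s, HasDerivAt g (g' s) s) ∧ ∀ s, HasDerivAt g' (m ^ 2 * g s - G s) s := by
  have hR := h.hasDerivAt_firstIntegral hG0 hG
  have hg := h.hasDerivAt (continuous_iff_continuousAt.2 fun s => (hR s).continuousAt)
  refine ⟨_, hg, fun s => ?_⟩
  have hexp : HasDerivAt (fun s => exp (m * s)) (exp (m * s) * m) s := by
    simpa using ((hasDerivAt_id s).const_mul m).exp
  refine ((hexp.mul (hR s)).sub ((hg s).const_mul m)).congr_deriv ?_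
  have hcancel : exp (m * s) * exp (-(m * s)) = 1 := by rw [← exp_add]; simp
  linear_combination -G s * hcancel

theorem exists_of_antitone (hR : Antitone R)
    (hint : ∀ ⦃a b : ℝ⦄, a ≤ b →
      exp (m * b) * g b - exp (m * a) * g a = ∫ s in a..b, exp (2 * m * s) * R s) :
    ∃ R' ν, HelmholtzSolution m g R' ν := by
  set F := hR.neg.stieltjesFunction with hF
  have hae : ∀ᵐ s, -F s = R s := by
    filter_upwards [hR.neg.countable_not_continuousAt.ae_notMem volume] with s hs
    rw [hF, hR.neg.stieltjesFunction_eq, (not_not.1 hs).continuousWithinAt.rightLim_eq]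
    simp
  refine ⟨fun s => -F s, F.measure.withDensity fun r => ENNReal.ofReal (exp (m * r)),
    F.mono.neg, fun a b hab => ?_, fun a b _ => ?_⟩
  · rw [hint hab]
    refine intervalIntegral.integral_congr_ae ?_
    filter_upwards [hae] with s hs _
    rw [hs]
  · have hone : ((fun r => ENNReal.ofReal (exp (m * r))) * fun r =>
        ENNReal.ofReal (exp (-(m * r)))) = 1 := by
      funext r
      rw [Pi.mul_apply, ← ENNReal.ofReal_mul (exp_pos _).le, ← exp_add]
      simp
    rw [restrict_withDensity measurableSet_Ioc,
      lintegral_withDensity_eq_lintegral_mul _ (by fun_prop) (by fun_prop), hone]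
    simp [F.measure_Ioc, neg_add_eq_sub]

theorem exists_toReal_greenPotential [SFinite ν] (hm : 0 < m)
    (hfin : ∀ s, greenPotential m ν s ≠ ⊤) :
    ∃ R, HelmholtzSolution m (fun s => (greenPotential m ν s).toReal) R ν := by
  set T : ℝ → ENNReal := fun r => ∫⁻ t in Ioi r, ENNReal.ofReal (exp (-(m * t))) ∂ν with hT
  have hTfin (r) : T r ≠ ⊤ := lintegral_exp_neg_Ioi_ne_top hm (hfin r)
  have hanti : Antitone fun r => (T r).toReal := fun a b hab =>
    ENNReal.toReal_mono (hTfin a) (lintegral_mono_set (Ioi_subset_Ioi hab))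
  have hnn (r) : 0 ≤ exp (2 * m * r) * (T r).toReal := by positivity
  have hmeas : Measurable fun r => exp (2 * m * r) * (T r).toReal :=
    (by fun_prop : Measurable fun r : ℝ => exp (2 * m * r)).mul hanti.measurable
  have hlint (s) : ∫⁻ r in Iic s, ENNReal.ofReal (exp (2 * m * r) * (T r).toReal)
      = ENNReal.ofReal (exp (m * s)) * greenPotential m ν s := by
    rw [← lintegral_exp_mul_tail hm]
    refine lintegral_congr fun r => ?_
    rw [ENNReal.ofReal_mul (exp_pos _).le, ENNReal.ofReal_toReal (hTfin r)]
  have hintegrable (s) : IntegrableOn (fun r => exp (2 * m * r) * (T r).toReal) (Iic s) := by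
    refine ⟨hmeas.aestronglyMeasurable, ?_⟩
    rw [hasFiniteIntegral_iff_ofReal (Eventually.of_forall hnn), hlint]
    exact ENNReal.mul_lt_top ENNReal.ofReal_lt_top (hfin s).lt_top
  have hval (s) : exp (m * s) * (greenPotential m ν s).toReal
      = ∫ r in Iic s, exp (2 * m * r) * (T r).toReal := by
    rw [integral_eq_lintegral_of_nonneg_ae (Eventually.of_forall hnn) hmeas.aestronglyMeasurable,
      hlint, ENNReal.toReal_mul, ENNReal.toReal_ofReal (exp_pos _).le]
  refine ⟨_, hanti, fun a b _ => ?_, fun a b hab => ?_⟩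
  · rw [hval, hval, intervalIntegral.integral_Iic_sub_Iic (hintegrable a) (hintegrable b)]
  · have hunion : T a = ∫⁻ r in Ioc a b, ENNReal.ofReal (exp (-(m * r))) ∂ν + T b := by
      rw [hT, ← lintegral_union measurableSet_Ioi (Ioc_disjoint_Ioi le_rfl),
        Ioc_union_Ioi_eq_Ioi hab]
    have hne := ne_top_of_le_ne_top (hTfin a) (hunion ▸ le_self_add)
    rw [hunion, ENNReal.toReal_add hne (hTfin b), add_sub_cancel_right, ENNReal.ofReal_toReal hne]

end HelmholtzSolution

end Green

/-! ### The kernels `ψ_n` in the logarithmic variable -/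

section Psi

open Real Topology

/-- The exponential sum `∑_{j ≤ n} c_j e^{-jy}`, a polynomial in the variable `e^{-y}`. -/
noncomputable def expSum (c : ℕ → ℝ) (n : ℕ) (y : ℝ) : ℝ :=
  ∑ j ∈ Finset.range (n + 1), c j * exp (-(j * y))

/-- The `j`-th coefficient of the polynomial `P_n`. -/
def PkCoeff (n j : ℕ) : ℝ := (-1) ^ j * ((2 * n).choose (j + n) : ℝ)

/-- `ψ_n(e^y) / (2n)!`. This normalisation makes `psiLog n` the fundamental solution of
`D ∏_{j=1}^n (j² - D²)`. -/
noncomputable def psiLog (n : ℕ) (y : ℝ) : ℝ := psiK n (exp y) / ((2 * n).factorial : ℝ)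

/-- The derivative of `psiLog n`, from the right at the jump of `psiLog 0`. -/
noncomputable def psiLogDeriv (n : ℕ) (y : ℝ) : ℝ :=
  expSum (fun j => -j * PkCoeff n j) n |y| / ((2 * n).factorial : ℝ)

variable {c : ℕ → ℝ} {n : ℕ} {y : ℝ}

lemma hasDerivAt_expSum (c : ℕ → ℝ) (n : ℕ) (y : ℝ) :
    HasDerivAt (expSum c n) (expSum (fun j => -j * c j) n y) y := by
  refine HasDerivAt.fun_sum fun j _ => ?_
  refine (((hasDerivAt_id y).const_mul (j : ℝ)).neg.exp.const_mul (c j)).congr_deriv ?_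
  simp only [Pi.neg_apply, id]
  ring

@[fun_prop]
lemma continuous_expSum (c : ℕ → ℝ) (n : ℕ) : Continuous (expSum c n) := by
  unfold expSum; fun_prop

lemma abs_expSum_le (hy : 0 ≤ y) : |expSum c n y| ≤ ∑ j ∈ Finset.range (n + 1), |c j| := by
  refine (Finset.abs_sum_le_sum_abs _ _).trans (Finset.sum_le_sum fun j _ => ?_)
  rw [abs_mul, abs_exp]
  exact mul_le_of_le_one_right (abs_nonneg _) (exp_le_one_iff.2 (neg_nonpos.2 (by positivity)))

lemma abs_expSum_sub_le (hy : 0 ≤ y) :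
    |expSum c n y - c 0| ≤ (∑ j ∈ Finset.range (n + 1), |c j|) * exp (-y) := by
  have hshift : expSum c n y - c 0
      = ∑ j ∈ Finset.range n, c (j + 1) * exp (-((j + 1 : ℕ) * y)) := by
    simp [expSum, Finset.sum_range_succ']
  rw [hshift, Finset.sum_range_succ', add_mul]
  refine ((Finset.abs_sum_le_sum_abs _ _).trans ?_).trans
    (le_add_of_nonneg_right (by positivity))
  rw [Finset.sum_mul]
  refine Finset.sum_le_sum fun j _ => ?_
  rw [abs_mul, abs_exp]
  gcongr
  push_cast
  nlinarith [mul_nonneg j.cast_nonneg hy]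

lemma Pk_exp_neg (n : ℕ) (y : ℝ) : Pk n (exp (-y)) = expSum (PkCoeff n) n y := by
  refine Finset.sum_congr rfl fun j _ => ?_
  rw [PkCoeff, neg_pow, ← exp_nat_mul, mul_neg]
  ring

lemma PkCoeff_zero_right (n : ℕ) : PkCoeff n 0 = ((2 * n).choose n : ℝ) := by simp [PkCoeff]

lemma sq_sub_sq_mul_choose {n j : ℕ} (hj : j ≤ n) :
    ((n + 1 : ℝ) ^ 2 - j ^ 2) * ((2 * (n + 1)).choose (j + (n + 1)) : ℝ)
      = (2 * n + 2) * (2 * n + 1) * ((2 * n).choose (j + n) : ℝ) := by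
  obtain ⟨d, rfl⟩ := Nat.exists_eq_add_of_le hj
  rw [Nat.cast_choose ℝ (by omega), Nat.cast_choose ℝ (by omega),
    show 2 * (j + d + 1) - (j + (j + d + 1)) = d + 1 by omega,
    show 2 * (j + d) - (j + (j + d)) = d by omega,
    show 2 * (j + d + 1) = 2 * (j + d) + 1 + 1 by ring,
    show j + (j + d + 1) = j + (j + d) + 1 by ring, Nat.factorial_succ, Nat.factorial_succ,
    Nat.factorial_succ (j + (j + d)), Nat.factorial_succ d]
  push_cast
  field_simp
  ring

lemma expSum_sq_mul_PkCoeff_succ (n : ℕ) (y : ℝ) :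
    expSum (fun j => -j * (-j * PkCoeff (n + 1) j)) (n + 1) y
      = (n + 1 : ℝ) ^ 2 * expSum (PkCoeff (n + 1)) (n + 1) y
        - (2 * n + 2) * (2 * n + 1) * expSum (PkCoeff n) n y := by
  rw [eq_sub_iff_add_eq', ← eq_sub_iff_add_eq, eq_comm]
  simp only [expSum]
  rw [Finset.mul_sum, Finset.mul_sum, ← Finset.sum_sub_distrib, Finset.sum_range_succ]
  have htop : (n + 1 : ℝ) ^ 2 * (PkCoeff (n + 1) (n + 1) * exp (-((n + 1 : ℕ) * y)))
      - -((n + 1 : ℕ) : ℝ) * (-((n + 1 : ℕ) : ℝ) * PkCoeff (n + 1) (n + 1)) *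
        exp (-((n + 1 : ℕ) * y)) = 0 := by
    push_cast; ring
  rw [htop, add_zero]
  refine Finset.sum_congr rfl fun j hj => ?_
  have := sq_sub_sq_mul_choose (Finset.mem_range_succ_iff.1 hj)
  simp only [PkCoeff]
  linear_combination (-1) ^ j * exp (-(j * y)) * this

lemma two_mul_expSum_PkCoeff_zero (n : ℕ) :
    2 * expSum (PkCoeff (n + 1)) (n + 1) 0 = ((2 * (n + 1)).choose (n + 1) : ℝ) := by
  have halt : expSum (PkCoeff (n + 1)) (n + 1) 0 = ((2 * n + 1).choose (n + 1) : ℝ) := by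
    have h : (∑ i ∈ Finset.range (n + 1 + 1), (-1) ^ i * ((2 * n + 1 + 1).choose i : ℝ))
        = (-1) ^ (n + 1) * ((2 * n + 1).choose (n + 1) : ℝ) := by
      exact_mod_cast Int.alternating_sum_range_choose_eq_choose (n := 2 * n + 1) (m := n + 1)
    have hsq : ((-1 : ℝ) ^ (n + 1)) * (-1) ^ (n + 1) = 1 := by rw [← mul_pow]; simp
    rw [← one_mul (Nat.cast _), ← hsq, mul_assoc, ← h, expSum, ← Finset.sum_range_reflect,
      Finset.mul_sum]
    refine Finset.sum_congr rfl fun j hj => ?_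
    obtain ⟨d, hd⟩ := Nat.exists_eq_add_of_le (Finset.mem_range_succ_iff.1 hj)
    have hchoose : (2 * (n + 1)).choose (d + (n + 1)) = (2 * n + 1 + 1).choose j := by
      rw [show 2 * n + 1 + 1 = 2 * (n + 1) by ring]
      exact Nat.choose_symm_of_eq_add (by omega)
    rw [show n + 1 + 1 - 1 - j = d by omega, PkCoeff, hchoose, hd, pow_add]
    have hsqj : ((-1 : ℝ) ^ j) * (-1) ^ j = 1 := by rw [← mul_pow]; simp
    simp only [mul_zero, neg_zero, exp_zero, mul_one]
    linear_combination (-(-1 : ℝ) ^ d * ((2 * n + 1 + 1).choose j : ℝ)) * hsqj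
  rw [halt, show 2 * (n + 1) = 2 * n + 1 + 1 by ring, Nat.choose_succ_succ (2 * n + 1) n,
    Nat.choose_symm_of_eq_add (by omega : 2 * n + 1 = n + (n + 1))]
  push_cast
  ring

lemma psiLog_eq_ite (n : ℕ) (y : ℝ) : psiLog n y =
    (if 0 ≤ y then expSum (PkCoeff n) n y else PkCoeff n 0 - expSum (PkCoeff n) n (-y)) /
      ((2 * n).factorial : ℝ) := by
  have hneg : Pk n (exp y) = expSum (PkCoeff n) n (-y) := by rw [← Pk_exp_neg, neg_neg]
  rw [psiLog, psiK, Pkhat, ← exp_neg, Pk_exp_neg, hneg, neg_sub, PkCoeff_zero_right]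
  simp only [one_le_exp_iff]

lemma psiLog_of_nonneg (hy : 0 ≤ y) :
    psiLog n y = expSum (PkCoeff n) n y / ((2 * n).factorial : ℝ) := by
  rw [psiLog_eq_ite, if_pos hy]

lemma psiLog_of_neg (hy : y < 0) :
    psiLog n y = (PkCoeff n 0 - expSum (PkCoeff n) n (-y)) / ((2 * n).factorial : ℝ) := by
  rw [psiLog_eq_ite, if_neg (not_le.2 hy)]

lemma psiLog_zero (y : ℝ) : psiLog 0 y = if 0 ≤ y then 1 else 0 := by
  simp [psiLog_eq_ite, expSum, PkCoeff]

lemma psiLog_one (y : ℝ) :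
    psiLog 1 y = if 0 ≤ y then 1 - exp (-y) / 2 else exp y / 2 := by
  rw [psiLog_eq_ite]
  split_ifs <;> simp [expSum, PkCoeff, Finset.sum_range_succ]; ring

@[fun_prop]
lemma measurable_psiLog (n : ℕ) : Measurable (psiLog n) := by
  rw [funext (psiLog_eq_ite n)]
  have h := (continuous_expSum (PkCoeff n) n).measurable
  exact (Measurable.ite measurableSet_Ici h
    (measurable_const.sub (h.comp measurable_neg))).div_const _

lemma continuous_psiLog_succ (n : ℕ) : Continuous (psiLog (n + 1)) := by
  rw [funext (psiLog_eq_ite (n + 1))]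
  refine (Continuous.if_le (by fun_prop) (by fun_prop) continuous_const continuous_id
    fun y (hy : 0 = y) => ?_).div_const _
  rw [← hy, PkCoeff_zero_right, ← two_mul_expSum_PkCoeff_zero, neg_zero]
  ring

lemma continuous_psiLogDeriv (n : ℕ) : Continuous (psiLogDeriv n) := by
  unfold psiLogDeriv; fun_prop

lemma hasDerivWithinAt_psiLog (n : ℕ) (y : ℝ) :
    HasDerivWithinAt (psiLog n) (psiLogDeriv n y) (Ioi y) y := by
  rcases le_or_gt 0 y with hy | hy
  · rw [psiLogDeriv, abs_of_nonneg hy]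
    exact ((hasDerivAt_expSum (PkCoeff n) n y).hasDerivWithinAt.div_const _).congr
      (fun x hx => psiLog_of_nonneg (hy.trans (le_of_lt hx))) (psiLog_of_nonneg hy)
  · rw [psiLogDeriv, abs_of_neg hy]
    have h := (((hasDerivAt_expSum (PkCoeff n) n (-y)).comp y (hasDerivAt_neg y)).const_sub
      (PkCoeff n 0)).div_const ((2 * n).factorial : ℝ)
    refine ((h.congr_deriv (by ring)).congr_of_eventuallyEq ?_).hasDerivWithinAt
    filter_upwards [Iio_mem_nhds hy] with x hx using psiLog_of_neg hx

lemma factorial_two_mul_succ (n : ℕ) :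
    ((2 * (n + 1)).factorial : ℝ) = (2 * n + 2) * (2 * n + 1) * ((2 * n).factorial : ℝ) := by
  rw [show 2 * (n + 1) = 2 * n + 1 + 1 by ring, Nat.factorial_succ, Nat.factorial_succ]
  push_cast; ring

lemma hasDerivWithinAt_psiLogDeriv_succ (n : ℕ) (y : ℝ) :
    HasDerivWithinAt (psiLogDeriv (n + 1)) ((n + 1 : ℝ) ^ 2 * psiLog (n + 1) y - psiLog n y)
      (Ioi y) y := by
  rcases le_or_gt 0 y with hy | hy
  · have h := ((hasDerivAt_expSum (fun j => -j * PkCoeff (n + 1) j) (n + 1) y).hasDerivWithinAt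
      (s := Ioi y)).div_const ((2 * (n + 1)).factorial : ℝ)
    refine (h.congr_deriv ?_).congr
      (fun x hx => by rw [psiLogDeriv, abs_of_nonneg (hy.trans (le_of_lt hx))])
      (by rw [psiLogDeriv, abs_of_nonneg hy])
    rw [psiLog_of_nonneg hy, psiLog_of_nonneg hy, factorial_two_mul_succ,
      expSum_sq_mul_PkCoeff_succ]
    field_simp
  · have h := ((hasDerivAt_expSum (fun j => -j * PkCoeff (n + 1) j) (n + 1) (-y)).comp y
      (hasDerivAt_neg y)).div_const ((2 * (n + 1)).factorial : ℝ)
    refine ((h.congr_deriv ?_).congr_of_eventuallyEq ?_).hasDerivWithinAt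
    · have hchoose := sq_sub_sq_mul_choose (Nat.zero_le n)
      rw [psiLog_of_neg hy, psiLog_of_neg hy, factorial_two_mul_succ, expSum_sq_mul_PkCoeff_succ]
      field_simp
      simp only [PkCoeff_zero_right, zero_add, Nat.cast_zero] at hchoose ⊢
      refine mul_left_cancel₀ (Nat.cast_add_one_ne_zero n : (n + 1 : ℝ) ≠ 0) ?_
      linear_combination -hchoose
    · filter_upwards [Iio_mem_nhds hy] with x hx
      rw [psiLogDeriv, abs_of_neg hx, Function.comp]

lemma exists_abs_psiLog_le (n : ℕ) : ∃ C, 0 ≤ C ∧ ∀ y, |psiLog n y| ≤ C * min 1 (exp y) := by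
  refine ⟨(∑ j ∈ Finset.range (n + 1), |PkCoeff n j|) / ((2 * n).factorial : ℝ),
    by positivity, fun y => ?_⟩
  rcases le_or_gt 0 y with hy | hy
  · rw [psiLog_of_nonneg hy, abs_div, Nat.abs_cast, min_eq_left (one_le_exp hy), mul_one]
    gcongr
    exact abs_expSum_le hy
  · rw [psiLog_of_neg hy, abs_div, Nat.abs_cast, min_eq_right (exp_le_one_iff.2 hy.le),
      div_mul_eq_mul_div, abs_sub_comm]
    gcongr
    simpa using abs_expSum_sub_le (c := PkCoeff n) (n := n) (neg_nonneg.2 hy.le)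

lemma exists_abs_psiLog_le_const (n : ℕ) : ∃ C, ∀ y, |psiLog n y| ≤ C := by
  obtain ⟨C, hC, h⟩ := exists_abs_psiLog_le n
  exact ⟨C, fun y => (h y).trans (mul_le_of_le_one_right hC (min_le_left _ _))⟩

lemma exists_abs_psiLogDeriv_le (n : ℕ) : ∃ C, ∀ y, |psiLogDeriv n y| ≤ C := by
  refine ⟨(∑ j ∈ Finset.range (n + 1), |-j * PkCoeff n j|) / ((2 * n).factorial : ℝ),
    fun y => ?_⟩
  rw [psiLogDeriv, abs_div, Nat.abs_cast]
  gcongr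
  exact abs_expSum_le (abs_nonneg y)

lemma intervalIntegrable_psiLog (n : ℕ) (a b : ℝ) : IntervalIntegrable (psiLog n) volume a b := by
  obtain ⟨C, hC⟩ := exists_abs_psiLog_le_const n
  exact intervalIntegrable_iff.2 (Measure.integrableOn_of_bounded (M := C) (by simp)
    (measurable_psiLog n).aestronglyMeasurable (Eventually.of_forall hC))

lemma helmholtzSolution_psiLog_succ (hn : ∀ y, 0 ≤ psiLog n y) :
    HelmholtzSolution (n + 1) (psiLog (n + 1))
      (fun y => exp (-((n + 1) * y)) * ((n + 1) * psiLog (n + 1) y + psiLogDeriv (n + 1) y))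
      (volume.withDensity fun y => ENNReal.ofReal (psiLog n y)) :=
  .of_hasDerivWithinAt (continuous_psiLog_succ n) (continuous_psiLogDeriv (n + 1))
    (hasDerivWithinAt_psiLog (n + 1)) (hasDerivWithinAt_psiLogDeriv_succ n) hn
    (measurable_psiLog n) (intervalIntegrable_psiLog n)

lemma psiLog_succ_nonneg_and_eq_greenPotential (hn : ∀ y, 0 ≤ psiLog n y) (y : ℝ) :
    0 ≤ psiLog (n + 1) y ∧ ENNReal.ofReal (psiLog (n + 1) y) =
      greenPotential (n + 1) (volume.withDensity fun y => ENNReal.ofReal (psiLog n y)) y := by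
  obtain ⟨C, hC⟩ := exists_abs_psiLog_le_const (n + 1)
  obtain ⟨C', hC'⟩ := exists_abs_psiLogDeriv_le (n + 1)
  have hn1 : (0 : ℝ) < n + 1 := by positivity
  have htop : Tendsto (fun y => exp (-((n + 1) * y)) *
      ((n + 1) * psiLog (n + 1) y + psiLogDeriv (n + 1) y)) atTop (𝓝 0) := by
    refine (tendsto_exp_neg_atTop_nhds_zero.comp
      (tendsto_id.const_mul_atTop hn1)).zero_mul_isBoundedUnder_le ?_
    refine isBoundedUnder_of ⟨(n + 1) * C + C', fun y => (abs_add_le _ _).trans ?_⟩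
    rw [abs_mul, abs_of_pos hn1]
    gcongr
    exacts [hC y, hC' y]
  have hbot : Tendsto (fun y => exp ((n + 1) * y) * psiLog (n + 1) y) atBot (𝓝 0) :=
    (tendsto_exp_atBot.comp (tendsto_id.const_mul_atBot hn1)).zero_mul_isBoundedUnder_le
      (isBoundedUnder_of ⟨C, hC⟩)
  simpa using (helmholtzSolution_psiLog_succ hn).eq_add_greenPotential_of_tendsto hn1 htop le_rfl
    hbot le_rfl y

lemma psiLog_nonneg (n : ℕ) (y : ℝ) : 0 ≤ psiLog n y := by
  induction n generalizing y with
  | zero => rw [psiLog_zero]; split_ifs <;> simp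
  | succ n ih => exact (psiLog_succ_nonneg_and_eq_greenPotential ih y).1

theorem ofReal_psiLog_succ (n : ℕ) (y : ℝ) : ENNReal.ofReal (psiLog (n + 1) y) =
    ∫⁻ r, ENNReal.ofReal (greenKernel (n + 1) y r) * ENNReal.ofReal (psiLog n r) := by
  rw [(psiLog_succ_nonneg_and_eq_greenPotential (psiLog_nonneg n) y).2, greenPotential,
    lintegral_withDensity_eq_lintegral_mul _ (by fun_prop) (by fun_prop)]
  simp [mul_comm]

lemma exists_le_psiLog_succ (n : ℕ) : ∃ c > 0, ∀ y, c * min 1 (exp y) ≤ psiLog (n + 1) y := by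
  induction n with
  | zero =>
    refine ⟨1 / 2, by norm_num, fun y => ?_⟩
    rw [psiLog_one]
    split_ifs with hy
    · linarith [min_le_left 1 (exp y), exp_le_one_iff.2 (neg_nonpos.2 hy)]
    · linarith [min_le_right 1 (exp y)]
  | succ n ih =>
    obtain ⟨c, hc, h⟩ := ih
    set m : ℝ := (n + 1 : ℕ) + 1
    have hm0 : 0 < m := by positivity
    refine ⟨exp (-m) / (2 * m) * c, by positivity, fun y => ?_⟩
    rw [← ENNReal.ofReal_le_ofReal_iff (psiLog_nonneg _ _), ofReal_psiLog_succ]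
    calc ENNReal.ofReal (exp (-m) / (2 * m) * c * min 1 (exp y))
        = ∫⁻ r in Icc y (y + 1), ENNReal.ofReal (exp (-m) / (2 * m) * c * min 1 (exp y)) := by simp
      _ ≤ ∫⁻ r in Icc y (y + 1), ENNReal.ofReal (greenKernel m y r) *
            ENNReal.ofReal (psiLog (n + 1) r) := by
          refine setLIntegral_mono' measurableSet_Icc fun r hr => ?_
          rw [← ENNReal.ofReal_mul (greenKernel_nonneg hm0 _ _), mul_assoc]
          refine ENNReal.ofReal_le_ofReal (mul_le_mul ?_ ?_ (by positivity)
            (greenKernel_nonneg hm0 _ _))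
          · rw [greenKernel]
            gcongr
            exact mul_le_of_le_one_right hm0.le (abs_le.2 ⟨by linarith [hr.2], by linarith [hr.1]⟩)
          · refine le_trans ?_ (h r)
            gcongr
            exact hr.1
      _ ≤ _ := setLIntegral_le_lintegral _ _

end Psi

/-! ### Potentials of the kernels `ψ_n` -/

section PsiPotential

open Real

/-- The potential `∫ ψ_n(e^{s-r}) / (2n)! σ(dr)` of a measure on the line. It takes values in
`ℝ≥0∞`, so that it makes sense for every measure. -/
noncomputable def psiPotential (n : ℕ) (σ : Measure ℝ) (s : ℝ) : ENNReal :=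
  ∫⁻ r, ENNReal.ofReal (psiLog n (s - r)) ∂σ

/-- `u` is a nonnegative weak solution of `D ∏_{j=1}^n (j² - D²) u = σ`, written as a potential
plus the homogeneous solution `c + A e^s`. The solution `e^s` is absent from the case `n = 0`,
in which the equation is `D u = σ`. -/
def HasPsiRepresentation (n : ℕ) (u : ℝ → ℝ) (σ : Measure ℝ) : Prop :=
  (∀ s, 0 ≤ u s) ∧ ∃ c A : ℝ, 0 ≤ c ∧ 0 ≤ A ∧ (n = 0 → A = 0) ∧
    ∀ s, ENNReal.ofReal (u s) = ENNReal.ofReal (c + A * exp s) + psiPotential n σ s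

variable {m ε s : ℝ} {n : ℕ} {u g R : ℝ → ℝ} {σ : Measure ℝ}

lemma measurable_greenPotential [SFinite σ] (m : ℝ) : Measurable (greenPotential m σ) := by
  unfold greenPotential greenKernel
  exact Measurable.lintegral_prod_right' (f := fun p : ℝ × ℝ =>
    ENNReal.ofReal (exp (-(m * |p.1 - p.2|)) / (2 * m))) (by fun_prop)

lemma psiPotential_add (n : ℕ) (σ τ : Measure ℝ) (s : ℝ) :
    psiPotential n (σ + τ) s = psiPotential n σ s + psiPotential n τ s :=
  lintegral_add_measure _ _ _

@[simp]
lemma psiPotential_zero_measure (n : ℕ) (s : ℝ) : psiPotential n 0 s = 0 :=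
  lintegral_zero_measure _

lemma psiPotential_withDensity {G : ℝ → ENNReal} (hG : Measurable G) (n : ℕ) (s : ℝ) :
    psiPotential n (volume.withDensity G) s
      = ∫⁻ q, ENNReal.ofReal (psiLog n (s - q)) * G q := by
  rw [psiPotential, lintegral_withDensity_eq_lintegral_mul _ hG (by fun_prop)]
  simp [mul_comm]

lemma psiPotential_zero_withDensity {G : ℝ → ENNReal} (hG : Measurable G) (s : ℝ) :
    psiPotential 0 (volume.withDensity G) s = ∫⁻ q in Iic s, G q := by
  rw [psiPotential_withDensity hG, ← lintegral_indicator measurableSet_Iic]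
  refine lintegral_congr fun q => ?_
  by_cases hq : q ≤ s <;> simp [psiLog_zero, hq]

theorem psiPotential_succ [SFinite σ] (n : ℕ) (s : ℝ) :
    psiPotential (n + 1) σ s
      = psiPotential n (volume.withDensity (greenPotential (n + 1) σ)) s := by
  have hker (r : ℝ) : ENNReal.ofReal (psiLog (n + 1) (s - r))
      = ∫⁻ q, ENNReal.ofReal (psiLog n (s - q)) * ENNReal.ofReal (greenKernel (n + 1) q r) := by
    rw [ofReal_psiLog_succ, ← lintegral_sub_left_eq_self _ s]
    refine lintegral_congr fun q => ?_
    rw [mul_comm, greenKernel, greenKernel, sub_sub_sub_cancel_left]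
  rw [psiPotential_withDensity (measurable_greenPotential _), psiPotential, lintegral_congr hker,
    lintegral_lintegral_swap]
  · exact lintegral_congr fun q => lintegral_const_mul _ (by fun_prop)
  · unfold greenKernel Function.uncurry
    fun_prop

lemma lintegral_eq_top_of_le {α : Type*} [MeasurableSpace α] {μ : Measure α} {ε : ENNReal}
    {F : α → ENNReal} {S : Set α} (hε : ε ≠ 0) (hS : MeasurableSet S) (hμ : μ S = ⊤)
    (h : ∀ x ∈ S, ε ≤ F x) : ∫⁻ x, F x ∂μ = ⊤ := by
  refine eq_top_mono (setLIntegral_le_lintegral S F) (eq_top_mono (setLIntegral_mono' hS h) ?_)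
  rw [setLIntegral_const, hμ, ENNReal.mul_top hε]

lemma psiPotential_of_eq_add_greenPotential [SFinite σ] {A B : ℝ}
    (hg : ∀ s, ENNReal.ofReal (g s) = ENNReal.ofReal (B * exp (-((n + 1) * s))) +
      ENNReal.ofReal (A * exp ((n + 1) * s)) + greenPotential (n + 1) σ s) (s : ℝ) :
    psiPotential n (volume.withDensity fun s => ENNReal.ofReal (g s)) s
      = psiPotential n (volume.withDensity fun q => ENNReal.ofReal (B * exp (-((n + 1) * q)))) s
        + psiPotential n (volume.withDensity fun q => ENNReal.ofReal (A * exp ((n + 1) * q))) s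
        + psiPotential (n + 1) σ s := by
  rw [psiPotential_succ, ← psiPotential_add, ← psiPotential_add,
    ← withDensity_add_left (by fun_prop), ← withDensity_add_left (by fun_prop)]
  simp only [hg, Pi.add_def]

lemma exists_le_psiLog_of_nonneg (n : ℕ) : ∃ c > 0, ∀ y, 0 ≤ y → c ≤ psiLog n y := by
  cases n with
  | zero => exact ⟨1, one_pos, fun y hy => by simp [psiLog_zero, hy]⟩
  | succ n =>
    obtain ⟨c, hc, h⟩ := exists_le_psiLog_succ n
    refine ⟨c, hc, fun y hy => ?_⟩
    simpa [min_eq_left (one_le_exp hy)] using h y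

lemma psiPotential_exp_neg (hm : 0 ≤ m) (hε : 0 < ε) (n : ℕ) (s : ℝ) :
    psiPotential n (volume.withDensity fun q => ENNReal.ofReal (ε * exp (-(m * q)))) s = ⊤ := by
  obtain ⟨c, hc, h⟩ := exists_le_psiLog_of_nonneg n
  rw [psiPotential_withDensity (by fun_prop)]
  refine lintegral_eq_top_of_le (ε := ENNReal.ofReal (c * (ε * exp (-(m * s)))))
    (ENNReal.ofReal_pos.2 (by positivity)).ne' measurableSet_Iic volume_Iic fun q (hq : q ≤ s) => ?_
  rw [← ENNReal.ofReal_mul (psiLog_nonneg _ _)]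
  gcongr
  exacts [psiLog_nonneg _ _, h _ (sub_nonneg.2 hq)]

lemma psiPotential_succ_exp (hm : 1 ≤ m) (hε : 0 < ε) (n : ℕ) (s : ℝ) :
    psiPotential (n + 1) (volume.withDensity fun q => ENNReal.ofReal (ε * exp (m * q))) s
      = ⊤ := by
  obtain ⟨c, hc, h⟩ := exists_le_psiLog_succ n
  rw [psiPotential_withDensity (by fun_prop)]
  refine lintegral_eq_top_of_le (ε := ENNReal.ofReal (c * ε * exp (m * s)))
    (ENNReal.ofReal_pos.2 (by positivity)).ne' measurableSet_Ici volume_Ici fun q (hq : s ≤ q) => ?_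
  rw [← ENNReal.ofReal_mul (psiLog_nonneg _ _)]
  refine ENNReal.ofReal_le_ofReal ?_
  calc c * ε * exp (m * s) ≤ c * ε * exp (s - q + m * q) := by
        gcongr
        nlinarith
    _ = c * exp (s - q) * (ε * exp (m * q)) := by rw [exp_add]; ring
    _ ≤ psiLog (n + 1) (s - q) * (ε * exp (m * q)) := by
        gcongr
        simpa [min_eq_right (exp_le_one_iff.2 (sub_nonpos.2 hq))] using h (s - q)

lemma psiPotential_zero_exp (hε : 0 ≤ ε) (s : ℝ) :
    psiPotential 0 (volume.withDensity fun q => ENNReal.ofReal (ε * exp q)) s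
      = ENNReal.ofReal (ε * exp s) := by
  rw [psiPotential_zero_withDensity (by fun_prop), ← ofReal_integral_eq_lintegral_ofReal
    ((integrableOn_exp_Iic s).const_mul ε) (Eventually.of_forall fun q => by positivity),
    integral_const_mul, integral_exp_Iic]

lemma greenPotential_ne_top_of_psiPotential (h : psiPotential (n + 1) σ s ≠ ⊤) :
    greenPotential (n + 1) σ s ≠ ⊤ := by
  obtain ⟨c, hc, hψ⟩ := exists_le_psiLog_succ n
  refine ne_top_of_le_ne_top
    (ENNReal.mul_ne_top (ENNReal.ofReal_ne_top (r := 1 / (2 * (n + 1) * c))) h) ?_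
  rw [psiPotential, greenPotential, ← lintegral_const_mul _ (by fun_prop)]
  refine lintegral_mono fun r => ?_
  rw [← ENNReal.ofReal_mul (by positivity)]
  refine ENNReal.ofReal_le_ofReal ?_
  have hexp : exp (-((n + 1) * |s - r|)) ≤ min 1 (exp (s - r)) := by
    have hle : |s - r| ≤ (n + 1) * |s - r| :=
      le_mul_of_one_le_left (abs_nonneg _) (le_add_of_nonneg_left n.cast_nonneg)
    exact le_min (exp_le_one_iff.2 (by linarith [abs_nonneg (s - r)]))
      (exp_le_exp.2 (by linarith [neg_abs_le (s - r)]))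
  rw [greenKernel, one_div_mul_eq_div, div_le_div_iff₀ (by positivity) (by positivity)]
  nlinarith [hψ (s - r), mul_le_mul_of_nonneg_left hexp hc.le, n.cast_nonneg (α := ℝ)]

namespace HasPsiRepresentation

lemma psiPotential_ne_top (h : HasPsiRepresentation n u σ) (s : ℝ) : psiPotential n σ s ≠ ⊤ := by
  obtain ⟨-, c, A, -, -, -, hu⟩ := h
  exact ne_top_of_le_ne_top ENNReal.ofReal_ne_top (hu s ▸ le_add_self)

theorem succ (h : HasPsiRepresentation n u (volume.withDensity fun s => ENNReal.ofReal (g s)))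
    (hg : ∀ s, 0 ≤ g s) (hsol : HelmholtzSolution (n + 1) g R σ) :
    HasPsiRepresentation (n + 1) u σ := by
  have := hsol.isLocallyFiniteMeasure (by positivity)
  obtain ⟨A, B, hA, hB, hgAB⟩ := hsol.exists_eq_add_greenPotential (by positivity) hg
  have hsplit := psiPotential_of_eq_add_greenPotential hgAB
  have hfin := hsplit 0 ▸ h.psiPotential_ne_top 0
  have hB0 : B = 0 := by
    by_contra hne
    rw [psiPotential_exp_neg (by positivity) (hB.lt_of_ne' hne)] at hfin
    simp at hfin
  subst hB0
  obtain ⟨hu0, c, A', hc, hA', hn, hu⟩ := h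
  cases n with
  | zero =>
    refine ⟨hu0, c, A, hc, hA, by simp, fun s => ?_⟩
    rw [hu, hsplit, hn rfl, ENNReal.ofReal_add hc (mul_nonneg hA (exp_pos s).le),
      ← psiPotential_zero_exp hA]
    simp [← Pi.zero_def, add_assoc]
  | succ n =>
    have hA0 : A = 0 := by
      by_contra hne
      rw [psiPotential_succ_exp (by push_cast; linarith [n.cast_nonneg (α := ℝ)])
        (hA.lt_of_ne' hne)] at hfin
      simp at hfin
    refine ⟨hu0, c, A', hc, hA', by simp, fun s => ?_⟩
    simp [hu, hsplit, hA0, ← Pi.zero_def]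

theorem exists_helmholtzSolution [SFinite σ] (h : HasPsiRepresentation (n + 1) u σ) :
    ∃ g R, (∀ s, 0 ≤ g s) ∧ HelmholtzSolution (n + 1) g R σ ∧
      HasPsiRepresentation n u (volume.withDensity fun s => ENNReal.ofReal (g s)) := by
  have hfin (s) := greenPotential_ne_top_of_psiPotential (h.psiPotential_ne_top s)
  obtain ⟨R, hR⟩ := HelmholtzSolution.exists_toReal_greenPotential (by positivity) hfin
  obtain ⟨hu0, c, A, hc, hA, -, hu⟩ := h
  cases n with
  | zero =>
    refine ⟨_, _, fun s => ?_, hR.add_exp A, hu0, c, 0, hc, le_rfl, fun _ => rfl, fun s => ?_⟩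
    · positivity
    · have hden : (fun s => ENNReal.ofReal ((greenPotential ((0 : ℕ) + 1) σ s).toReal
          + A * exp (((0 : ℕ) + 1) * s)))
          = (fun s => ENNReal.ofReal (A * exp s)) + greenPotential ((0 : ℕ) + 1) σ := by
        funext s
        rw [ENNReal.ofReal_add (by positivity) (by positivity), ENNReal.ofReal_toReal (hfin s)]
        simp [add_comm]
      rw [hden, withDensity_add_left (by fun_prop), psiPotential_add, ← psiPotential_succ,
        psiPotential_zero_exp hA, hu, ENNReal.ofReal_add hc (by positivity)]
      simp [add_assoc]
  | succ n =>
    refine ⟨_, _, fun s => ENNReal.toReal_nonneg, hR, hu0, c, A, hc, hA, by simp, fun s => ?_⟩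
    simp only [hu, psiPotential_succ, ENNReal.ofReal_toReal (hfin _)]

end HasPsiRepresentation

end PsiPotential

/-! ### Smooth functions on the half-line in the logarithmic variable -/

section LogVariable

open Real Topology

variable {m n j : ℕ} {f w : ℝ → ℝ}

lemma concaveOn_of_hasDerivWithinAt_Ioi {S : Set ℝ} {Q D : ℝ → ℝ} (hS : Convex ℝ S)
    (hQ : ContinuousOn Q S) (hD : AntitoneOn D S)
    (hd : ∀ x ∈ S, HasDerivWithinAt Q (D x) (Ioi x) x) :
    ConcaveOn ℝ S Q := by
  refine concaveOn_of_slope_anti_adjacent hS fun {x y z} hx hz hxy hyz => ?_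
  have hxz : Icc x z ⊆ S := hS.ordConnected.out hx hz
  have hy : y ∈ S := hxz ⟨hxy.le, hyz.le⟩
  have hlin (r x : ℝ) (c : ℝ) : HasDerivAt (fun t => r + D y * (t - c)) (D y) x := by
    simpa using (((hasDerivAt_id x).sub_const c).const_mul (D y)).const_add r
  have hright : Q z ≤ Q y + D y * (z - y) :=
    image_le_of_deriv_right_le_deriv_boundary (hQ.mono ((Icc_subset_Icc_left hxy.le).trans hxz))
      (fun t ht => (hd t (hxz ⟨hxy.le.trans ht.1, ht.2.le⟩)).Ici_of_Ioi) (by simp)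
      (by fun_prop) (fun t _ => (hlin (Q y) t y).hasDerivWithinAt)
      (fun t ht => hD hy (hxz ⟨hxy.le.trans ht.1, ht.2.le⟩) ht.1) (right_mem_Icc.2 hyz.le)
  have hleft : Q x + D y * (y - x) ≤ Q y :=
    image_le_of_deriv_right_le_deriv_boundary (by fun_prop)
      (fun t _ => (hlin (Q x) t x).hasDerivWithinAt) (by simp)
      (hQ.mono ((Icc_subset_Icc_right hyz.le).trans hxz))
      (fun t ht => (hd t (hxz ⟨ht.1, ht.2.le.trans hyz.le⟩)).Ici_of_Ioi)
      (fun t ht => hD (hxz ⟨ht.1, ht.2.le.trans hyz.le⟩) hy ht.2.le) (right_mem_Icc.2 hxy.le)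
  rw [div_le_div_iff₀ (by linarith) (by linarith)]
  nlinarith

lemma hasDerivAt_iteratedDeriv_of_contDiffOn {S : Set ℝ} (hw : ContDiffOn ℝ m w S) (hS : IsOpen S)
    (hj : j < m) {x : ℝ} (hx : x ∈ S) :
    HasDerivAt (iteratedDeriv j w) (iteratedDeriv (j + 1) w x) x := by
  rw [iteratedDeriv_succ]
  have hmem := hS.mem_nhds hx
  exact ((((hw.differentiableOn_iteratedDerivWithin (by exact_mod_cast hj) hS.uniqueDiffOn) x hx)
    |>.differentiableAt hmem).congr_of_eventuallyEq
      ((iteratedDerivWithin_of_isOpen hS).symm.eventuallyEq_of_mem hmem)).hasDerivAt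

lemma continuousOn_iteratedDeriv_of_contDiffOn {S : Set ℝ} (hw : ContDiffOn ℝ m w S)
    (hS : IsOpen S) (hj : j ≤ m) : ContinuousOn (iteratedDeriv j w) S :=
  (hw.continuousOn_iteratedDerivWithin (by exact_mod_cast hj) hS.uniqueDiffOn).congr
    (iteratedDerivWithin_of_isOpen hS).symm

lemma iteratedDeriv_id_mul_of_contDiffAt {x : ℝ} (hw : ContDiffAt ℝ (j + 1 : ℕ) w x) :
    iteratedDeriv (j + 1) (fun y => y * w y) x
      = x * iteratedDeriv (j + 1) w x + (j + 1) * iteratedDeriv j w x := by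
  rw [iteratedDeriv_fun_mul contDiffAt_fun_id hw, Finset.sum_range_succ', Finset.sum_range_succ']
  simp [iteratedDeriv_succ', iteratedDeriv_const]
  ring

/-- `D ∏_{j=1}^n (j² - D²)` applied to `s ↦ e^s f(e^s)`, written with the derivatives of
`y ↦ y^{n+1} f(y)` that occur in the definition of the `k`-Stieltjes functions. -/
noncomputable def stieltjesDensity (n : ℕ) (f : ℝ → ℝ) (s : ℝ) : ℝ :=
  (-1) ^ n * exp ((n + 1) * s) * iteratedDeriv (2 * n + 1) (fun y => y ^ (n + 1) * f y) (exp s)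

lemma stieltjesDensity_nonneg_iff (n : ℕ) (f : ℝ → ℝ) :
    (∀ s, 0 ≤ stieltjesDensity n f s) ↔
      ∀ x > 0, 0 ≤ (-1) ^ n * iteratedDeriv (2 * n + 1) (fun y => y ^ (n + 1) * f y) x := by
  have hiff (s : ℝ) : 0 ≤ stieltjesDensity n f s ↔
      0 ≤ (-1) ^ n * iteratedDeriv (2 * n + 1) (fun y => y ^ (n + 1) * f y) (exp s) := by
    rw [stieltjesDensity, mul_right_comm, mul_nonneg_iff_of_pos_right (exp_pos _)]
  refine ⟨fun h x hx => ?_, fun h s => (hiff s).2 (h _ (exp_pos s))⟩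
  simpa [exp_log hx] using (hiff (log x)).1 (h _)

lemma contDiffOn_pow_mul (hf : ContDiffOn ℝ m f (Ioi 0)) (n : ℕ) :
    ContDiffOn ℝ m (fun y => y ^ n * f y) (Ioi 0) :=
  (contDiff_id.pow n).contDiffOn.mul hf

lemma hasDerivAt_iteratedDeriv_exp (hw : ContDiffOn ℝ m w (Ioi 0)) (hj : j < m) (s : ℝ) :
    HasDerivAt (fun t => iteratedDeriv j w (exp t)) (iteratedDeriv (j + 1) w (exp s) * exp s) s :=
  (hasDerivAt_iteratedDeriv_of_contDiffOn hw isOpen_Ioi hj (exp_pos s)).comp s (hasDerivAt_exp s)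

lemma continuous_iteratedDeriv_exp (hw : ContDiffOn ℝ m w (Ioi 0)) (hj : j ≤ m) :
    Continuous fun s => iteratedDeriv j w (exp s) :=
  (continuousOn_iteratedDeriv_of_contDiffOn hw isOpen_Ioi hj).comp_continuous continuous_exp exp_pos

lemma iteratedDeriv_pow_succ_mul (hf : ContDiffOn ℝ m f (Ioi 0)) (hj : j + 1 ≤ m) {x : ℝ}
    (hx : 0 < x) (n : ℕ) : iteratedDeriv (j + 1) (fun y => y ^ (n + 1) * f y) x
      = x * iteratedDeriv (j + 1) (fun y => y ^ n * f y) x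
        + (j + 1) * iteratedDeriv j (fun y => y ^ n * f y) x := by
  rw [← iteratedDeriv_id_mul_of_contDiffAt (((contDiffOn_pow_mul hf n).of_le
    (by exact_mod_cast hj)).contDiffAt (Ioi_mem_nhds hx))]
  simp only [pow_succ', mul_assoc]

lemma hasDerivAt_exp_mul_comp_exp (hf : ContDiffOn ℝ m f (Ioi 0)) (hm : 0 < m) (s : ℝ) :
    HasDerivAt (fun s => exp s * f (exp s)) (stieltjesDensity 0 f s) s := by
  simpa [stieltjesDensity, mul_comm] using
    hasDerivAt_iteratedDeriv_exp (contDiffOn_pow_mul hf 1) hm s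

lemma continuous_stieltjesDensity (hf : ContDiffOn ℝ m f (Ioi 0)) (hm : 2 * n + 1 ≤ m) :
    Continuous (stieltjesDensity n f) := by
  have := continuous_iteratedDeriv_exp (contDiffOn_pow_mul hf (n + 1)) hm
  unfold stieltjesDensity
  fun_prop

theorem exists_hasDerivAt_stieltjesDensity (hf : ContDiffOn ℝ m f (Ioi 0)) (hm : 2 * n + 3 ≤ m) :
    ∃ g' : ℝ → ℝ, (∀ s, HasDerivAt (stieltjesDensity n f) (g' s) s) ∧
      ∀ s, HasDerivAt g'
        ((n + 1) ^ 2 * stieltjesDensity n f s - stieltjesDensity (n + 1) f s) s := by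
  have hw := contDiffOn_pow_mul hf (n + 1)
  have hE (s : ℝ) : HasDerivAt (fun s => exp ((n + 1) * s)) (exp ((n + 1) * s) * (n + 1)) s := by
    simpa using ((hasDerivAt_id s).const_mul (n + 1 : ℝ)).exp
  have h₁ (s : ℝ) := hasDerivAt_iteratedDeriv_exp hw (j := 2 * n + 1) (by lia) s
  have h₂ (s : ℝ) := hasDerivAt_iteratedDeriv_exp hw (j := 2 * n + 2) (by lia) s
  refine ⟨_, fun s => ((hE s).const_mul ((-1) ^ n)).mul (h₁ s), fun s => ?_⟩
  refine (((((hE s).mul_const _).const_mul _).mul (h₁ s)).add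
    (((hE s).const_mul _).mul ((h₂ s).mul (hasDerivAt_exp s)))).congr_deriv ?_
  have hleibniz := iteratedDeriv_pow_succ_mul hf hm (exp_pos s) (n + 1)
  rw [stieltjesDensity, stieltjesDensity, show 2 * (n + 1) + 1 = 2 * n + 2 + 1 by ring, hleibniz,
    show ((n + 1 : ℕ) + 1 : ℝ) * s = (n + 1) * s + s by push_cast; ring, exp_add]
  simp only [Pi.mul_apply]
  push_cast
  ring

lemma hasDerivWithinAt_exp_mul_sub_iff {S : Set ℝ} {U q : ℝ → ℝ} {c d s : ℝ}
    (hU : HasDerivAt U (q s - c * U s) s) :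
    HasDerivWithinAt (fun t => exp (c * t) * (q t - c * U t)) (exp (c * s) * d) S s ↔
      HasDerivWithinAt q d S s := by
  have hE (c : ℝ) : HasDerivAt (fun t => exp (c * t)) (exp (c * s) * c) s := by
    simpa using ((hasDerivAt_id s).const_mul c).exp
  have hU' := hU.hasDerivWithinAt (s := S)
  have hcancel (t : ℝ) : exp (-c * t) * exp (c * t) = 1 := by rw [← exp_add]; simp
  constructor <;> intro h
  · refine (((hE (-c)).hasDerivWithinAt.mul h).add (hU'.const_mul c)).congr_deriv ?_
      |>.congr_of_eventuallyEq (Eventually.of_forall fun t => ?_) ?_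
    · linear_combination (d - c * (q s - c * U s)) * hcancel s
    · simp only [Pi.add_apply, Pi.mul_apply]
      linear_combination (-(q t - c * U t)) * hcancel t
    · simp only [Pi.add_apply, Pi.mul_apply]
      linear_combination (-(q s - c * U s)) * hcancel s
  · refine ((hE c).hasDerivWithinAt.mul (h.sub (hU'.const_mul c))).congr_deriv ?_
    simp only [Pi.sub_apply]
    ring

lemma hasDerivWithinAt_comp_exp_iff {Q : ℝ → ℝ} {d s : ℝ} :
    HasDerivWithinAt (fun t => Q (exp t)) (exp s * d) (Ioi s) s ↔
      HasDerivWithinAt Q d (Ioi (exp s)) (exp s) := by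
  constructor <;> intro h
  · have hlog := (hasDerivAt_log (exp_pos s).ne').hasDerivWithinAt (s := Ioi (exp s))
    rw [← log_exp s] at h
    simp only [exp_log (exp_pos _)] at h
    refine (h.comp (exp s) hlog fun t ht => log_lt_log (exp_pos s) ht).congr_deriv ?_
      |>.congr (fun t ht => ?_) ?_
    · field_simp
    · simp [exp_log ((exp_pos s).trans ht)]
    · simp
  · exact (h.comp s (hasDerivAt_exp s).hasDerivWithinAt fun t ht => exp_lt_exp.2 ht).congr_deriv
      (mul_comm _ _)

theorem hasDerivWithinAt_exp_mul_stieltjesDensity_iff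
    (hf : ContDiffOn ℝ (2 * n + 1 : ℕ) f (Ioi 0)) {d s : ℝ} :
    HasDerivWithinAt (fun t => exp ((n + 1) * t) * stieltjesDensity n f t)
        (exp (2 * (n + 1) * s) * d) (Ioi s) s ↔
      HasDerivWithinAt
        (fun x => (-1) ^ n * iteratedDeriv (2 * n + 1) (fun y => y ^ (n + 2) * f y) x)
        d (Ioi (exp s)) (exp s) := by
  set U : ℝ → ℝ := fun t => (-1) ^ n * iteratedDeriv (2 * n) (fun y => y ^ (n + 1) * f y) (exp t)
  set q : ℝ → ℝ := fun t =>
    (-1) ^ n * iteratedDeriv (2 * n + 1) (fun y => y ^ (n + 2) * f y) (exp t) with hq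
  have hsub (t : ℝ) : q t - (2 * n + 1) * U t
      = (-1) ^ n * (iteratedDeriv (2 * n + 1) (fun y => y ^ (n + 1) * f y) (exp t) * exp t) := by
    simp only [hq, iteratedDeriv_pow_succ_mul hf le_rfl (exp_pos t) (n + 1), U]
    push_cast
    ring
  have hU : HasDerivAt U (q s - (2 * n + 1) * U s) s := by
    rw [hsub]
    exact (hasDerivAt_iteratedDeriv_exp (contDiffOn_pow_mul hf (n + 1)) (by lia) s).const_mul _
  have hdensity (t : ℝ) : exp ((n + 1) * t) * stieltjesDensity n f t
      = exp ((2 * n + 1) * t) * (q t - (2 * n + 1) * U t) := by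
    rw [hsub, stieltjesDensity, show (2 * n + 1) * t = n * t + (n + 1) * t by ring,
      show (n + 1) * t = n * t + t by ring]
    simp only [exp_add]
    ring
  rw [← hasDerivWithinAt_comp_exp_iff, ← hq, ← hasDerivWithinAt_exp_mul_sub_iff hU,
    ← mul_assoc, ← exp_add, show (2 * n + 1) * s + s = 2 * (n + 1) * s by ring, funext hdensity]

theorem concaveOn_iff_exists_helmholtzSolution (hf : ContDiffOn ℝ (2 * n + 1 : ℕ) f (Ioi 0)) :
    ConcaveOn ℝ (Ioi 0)
        (fun x => (-1) ^ n * iteratedDeriv (2 * n + 1) (fun y => y ^ (n + 2) * f y) x) ↔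
      ∃ R ν, HelmholtzSolution (n + 1) (stieltjesDensity n f) R ν := by
  constructor
  · intro h
    set D : ℝ → ℝ := fun x => derivWithin (-fun x =>
      (-1) ^ n * iteratedDeriv (2 * n + 1) (fun y => y ^ (n + 2) * f y) x) (Ioi x) x
    have hanti : Antitone fun s => -D (exp s) := fun a b hab => neg_le_neg <|
      h.neg.monotoneOn_rightDeriv (by simp [exp_pos]) (by simp [exp_pos]) (exp_le_exp.2 hab)
    refine HelmholtzSolution.exists_of_antitone hanti fun a b hab => ?_
    have := continuous_stieltjesDensity hf le_rfl
    refine (intervalIntegral.integral_eq_sub_of_hasDeriv_right_of_le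
      (f := fun s => exp ((n + 1) * s) * stieltjesDensity n f s) hab (by fun_prop) (fun s _ => ?_)
      (intervalIntegrable_exp_mul_antitone hanti _ _ _)).symm
    rw [hasDerivWithinAt_exp_mul_stieltjesDensity_iff hf]
    simpa using (h.neg.hasDerivWithinAt_rightDeriv_of_mem_interior
      (by simp [exp_pos] : exp s ∈ interior (Ioi 0))).neg
  · rintro ⟨R, ν, h⟩
    refine concaveOn_of_hasDerivWithinAt_Ioi (D := fun x => R (log x)) (convex_Ioi 0)
      (continuousOn_const.mul (continuousOn_iteratedDeriv_of_contDiffOn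
        (contDiffOn_pow_mul hf _) isOpen_Ioi le_rfl))
      (fun x hx y _ hxy => h.antitone (log_le_log hx hxy)) fun x (hx : 0 < x) => ?_
    have := (hasDerivWithinAt_exp_mul_stieltjesDensity_iff hf).1
      (h.hasDerivWithinAt_exp_mul (log x))
    rwa [exp_log hx] at this

theorem isStieltjesK_add_two_iff (p : ℕ) (f : ℝ → ℝ) :
    IsStieltjesK (p + 2) f ↔ (∀ x > 0, 0 ≤ f x) ∧ ContDiffOn ℝ (2 * p + 1 : ℕ) f (Ioi 0) ∧
      (∀ n ≤ p, ∀ s, 0 ≤ stieltjesDensity n f s) ∧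
      ∃ R ν, HelmholtzSolution (p + 1) (stieltjesDensity p f) R ν := by
  have hsign : (∀ n, 1 ≤ n → n ≤ p + 1 → ∀ x > 0,
        0 ≤ (-1 : ℝ) ^ (n - 1) * iteratedDeriv (2 * n - 1) (fun y => y ^ n * f y) x) ↔
      ∀ n ≤ p, ∀ s, 0 ≤ stieltjesDensity n f s := by
    simp only [stieltjesDensity_nonneg_iff]
    constructor
    · exact fun h n hn => h (n + 1) (by lia) (by lia)
    · rintro h (_ | n) hn₁ hn₂
      · lia
      · exact h n (by lia)
  rw [IsStieltjesK, show 2 * (p + 2) - 3 = 2 * p + 1 by lia, show p + 2 - 1 = p + 1 by lia]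
  refine and_congr_right fun _ => and_congr_right fun hf => and_congr hsign ?_
  rw [← concaveOn_iff_exists_helmholtzSolution hf, ← neg_convexOn_iff]
  refine iff_of_eq (congrArg _ (funext fun x => ?_))
  simp [pow_succ]

theorem hasPsiRepresentation_zero_iff {u g : ℝ → ℝ} (hg0 : ∀ s, 0 ≤ g s) (hg : Continuous g) :
    HasPsiRepresentation 0 u (volume.withDensity fun s => ENNReal.ofReal (g s)) ↔
      (∀ s, 0 ≤ u s) ∧ ∀ s, HasDerivAt u (g s) s := by
  refine and_congr_right fun hu0 => ⟨?_, fun hu => ?_⟩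
  · rintro ⟨c, A, hc, -, hA, hu⟩
    simp only [hA rfl, zero_mul, add_zero,
      psiPotential_zero_withDensity hg.measurable.ennreal_ofReal] at hu
    have hint (s) : IntegrableOn g (Iic s) := by
      refine ⟨hg.aestronglyMeasurable, (hasFiniteIntegral_iff_ofReal
        (Eventually.of_forall hg0)).2 (lt_top_iff_ne_top.2 fun htop => ?_)⟩
      simpa [htop] using hu s
    have hu' (s) : u s = c + ∫ q in Iic s, g q := by
      have := hu s
      rwa [← ofReal_integral_eq_lintegral_ofReal (hint s) (Eventually.of_forall hg0),
        ← ENNReal.ofReal_add hc (integral_nonneg hg0), ENNReal.ofReal_eq_ofReal_iff (hu0 s)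
          (add_nonneg hc (integral_nonneg hg0))] at this
    refine fun s => ((intervalIntegral.integral_hasDerivAt_right (hg.intervalIntegrable 0 s)
      (hg.stronglyMeasurableAtFilter _ _) hg.continuousAt).const_add
        (u 0)).congr_of_eventuallyEq (Eventually.of_forall fun t => ?_)
    dsimp only
    rw [hu', hu', ← intervalIntegral.integral_Iic_sub_Iic (hint 0) (hint t)]
    ring
  · have hmono : Monotone u := monotone_of_hasDerivAt_nonneg hu hg0
    have hlim : Tendsto u atBot (𝓝 (⨅ s, u s)) :=
      tendsto_atBot_ciInf hmono ⟨0, by rintro _ ⟨s, rfl⟩; exact hu0 s⟩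
    have hc : 0 ≤ ⨅ s, u s := ge_of_tendsto' hlim hu0
    refine ⟨_, 0, hc, le_rfl, fun _ => rfl, fun s => ?_⟩
    rw [psiPotential_zero_withDensity hg.measurable.ennreal_ofReal,
      lintegral_Iic_ofReal_of_tendsto hg0 (fun a b => hg.intervalIntegrable a b)
        (fun a b _ => (intervalIntegral.integral_eq_sub_of_hasDerivAt (fun x _ => hu x)
          (hg.intervalIntegrable a b)).symm) hlim, zero_mul, add_zero,
      ← ENNReal.ofReal_add hc (sub_nonneg.2 (hmono.le_of_tendsto hlim s))]
    ring_nf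

theorem IsStieltjesK.exists_hasPsiRepresentation {p : ℕ} (hf : IsStieltjesK (p + 2) f) :
    ∃ σ, SFinite σ ∧ HasPsiRepresentation (p + 1) (fun s => exp s * f (exp s)) σ := by
  obtain ⟨hf0, hfc, hdensity, R, ν, hsol⟩ := (isStieltjesK_add_two_iff p f).1 hf
  have hcont {n : ℕ} (hn : n ≤ p) : Continuous (stieltjesDensity n f) :=
    continuous_stieltjesDensity hfc (by lia)
  have hrep : ∀ n ≤ p, HasPsiRepresentation n (fun s => exp s * f (exp s))
      (volume.withDensity fun s => ENNReal.ofReal (stieltjesDensity n f s)) := by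
    intro n
    induction n with
    | zero =>
      exact fun hn => (hasPsiRepresentation_zero_iff (hdensity 0 hn) (hcont hn)).2
        ⟨fun s => mul_nonneg (exp_pos s).le (hf0 _ (exp_pos s)),
          hasDerivAt_exp_mul_comp_exp hfc (by lia)⟩
    | succ n ih =>
      intro hn
      obtain ⟨g', hg, hg'⟩ := exists_hasDerivAt_stieltjesDensity (n := n) hfc (by lia)
      refine (ih (by lia)).succ (hdensity n (by lia)) <| .of_hasDerivWithinAt (hcont (by lia))
        (continuous_iff_continuousAt.2 fun s => (hg' s).continuousAt)
        (fun s => (hg s).hasDerivWithinAt) (fun s => (hg' s).hasDerivWithinAt)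
        (hdensity _ hn) (hcont hn).measurable (hcont hn).intervalIntegrable
  have := hsol.isLocallyFiniteMeasure (by positivity)
  exact ⟨ν, inferInstance, (hrep p le_rfl).succ (hdensity p le_rfl) hsol⟩

lemma contDiff_succ_of_hasDerivAt {u u' : ℝ → ℝ} (hu : ∀ s, HasDerivAt u (u' s) s)
    (hu' : ContDiff ℝ j u') : ContDiff ℝ (j + 1 : ℕ) u := by
  push_cast
  rw [contDiff_succ_iff_deriv, funext fun s => (hu s).deriv]
  exact ⟨fun s => (hu s).differentiableAt, by simp, hu'⟩

lemma contDiff_add_two_of_hasDerivAt {g g' G : ℝ → ℝ} {c : ℝ} (hg : ∀ s, HasDerivAt g (g' s) s)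
    (hg' : ∀ s, HasDerivAt g' (c * g s - G s) s) (hG : ContDiff ℝ j G) :
    ContDiff ℝ (j + 2 : ℕ) g := by
  have hsmooth : ∀ i ≤ j + 1, ContDiff ℝ i g ∧ ContDiff ℝ i g' := by
    intro i
    induction i with
    | zero =>
      exact fun _ => ⟨contDiff_zero.2 (continuous_iff_continuousAt.2 fun s => (hg s).continuousAt),
        contDiff_zero.2 (continuous_iff_continuousAt.2 fun s => (hg' s).continuousAt)⟩
    | succ i ih =>
      intro hi
      obtain ⟨hgi, hgi'⟩ := ih (by lia)
      exact ⟨contDiff_succ_of_hasDerivAt hg hgi', contDiff_succ_of_hasDerivAt hg'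
        ((contDiff_const.mul hgi).sub (hG.of_le (by exact_mod_cast (by lia : i ≤ j))))⟩
  exact contDiff_succ_of_hasDerivAt hg (hsmooth (j + 1) le_rfl).2

lemma contDiffOn_Ioi_of_comp_exp (h : ContDiff ℝ m fun s => exp s * f (exp s)) :
    ContDiffOn ℝ m f (Ioi 0) := by
  have hlog : ContDiffOn ℝ m log (Ioi 0) := contDiffOn_log.mono fun x hx => (ne_of_gt hx)
  refine ((contDiffOn_id.inv fun x hx => (ne_of_gt hx)).mul
    (h.comp_contDiffOn hlog)).congr fun x (hx : 0 < x) => ?_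
  simp [exp_log hx, hx.ne']

theorem HasPsiRepresentation.contDiff_and_eq_stieltjesDensity (n : ℕ) {j : ℕ} {g : ℝ → ℝ}
    (h : HasPsiRepresentation n (fun s => exp s * f (exp s))
      (volume.withDensity fun s => ENNReal.ofReal (g s)))
    (hg0 : ∀ s, 0 ≤ g s) (hg : ContDiff ℝ j g) :
    ContDiffOn ℝ (2 * n + 1 + j : ℕ) f (Ioi 0) ∧ g = stieltjesDensity n f ∧
      ∀ i ≤ n, ∀ s, 0 ≤ stieltjesDensity i f s := by
  induction n generalizing g j with
  | zero =>
    have hu := ((hasPsiRepresentation_zero_iff hg0 hg.continuous).1 h).2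
    have hf : ContDiffOn ℝ (j + 1 : ℕ) f (Ioi 0) :=
      contDiffOn_Ioi_of_comp_exp (contDiff_succ_of_hasDerivAt hu hg)
    have hgf : g = stieltjesDensity 0 f := funext fun s =>
      (hu s).unique (hasDerivAt_exp_mul_comp_exp hf j.succ_pos s)
    refine ⟨by simpa [add_comm] using hf, hgf, fun i hi => ?_⟩
    rwa [Nat.le_zero.1 hi, ← hgf]
  | succ n ih =>
    obtain ⟨g₀, R, hg₀0, hsol, hrep⟩ := h.exists_helmholtzSolution
    obtain ⟨g₀', hg₀, hg₀'⟩ := hsol.exists_hasDerivAt_of_continuous_density hg0 hg.continuous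
    obtain ⟨hf, rfl, hnonneg⟩ := ih hrep hg₀0 (contDiff_add_two_of_hasDerivAt hg₀ hg₀' hg)
    obtain ⟨d, hd, hd'⟩ := exists_hasDerivAt_stieltjesDensity (n := n) hf (by lia)
    obtain rfl : g₀' = d := funext fun s => (hg₀ s).unique (hd s)
    have hgf : g = stieltjesDensity (n + 1) f := funext fun s => by
      linarith [(hg₀' s).unique (hd' s)]
    refine ⟨by rwa [show 2 * (n + 1) + 1 + j = 2 * n + 1 + (j + 2) by ring], hgf, fun i hi => ?_⟩
    rcases hi.lt_or_eq with hlt | rfl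
    · exact hnonneg i (by lia)
    · rwa [← hgf]

theorem HasPsiRepresentation.isStieltjesK {p : ℕ} {σ : Measure ℝ} [SFinite σ]
    (h : HasPsiRepresentation (p + 1) (fun s => exp s * f (exp s)) σ) :
    IsStieltjesK (p + 2) f := by
  obtain ⟨g, R, hg0, hsol, hrep⟩ := h.exists_helmholtzSolution
  obtain ⟨hf, rfl, hnonneg⟩ :=
    hrep.contDiff_and_eq_stieltjesDensity p hg0 (contDiff_zero.2 hsol.continuous)
  refine (isStieltjesK_add_two_iff p f).2 ⟨fun x hx => ?_, hf, hnonneg, R, σ, hsol⟩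
  have hu : 0 ≤ exp (log x) * f (exp (log x)) := h.1 (log x)
  rw [exp_log hx] at hu
  exact (mul_nonneg_iff_of_pos_left hx).1 hu

theorem isStieltjesK_iff_exists_hasPsiRepresentation {p : ℕ} : IsStieltjesK (p + 2) f ↔
    ∃ σ, SFinite σ ∧ HasPsiRepresentation (p + 1) (fun s => exp s * f (exp s)) σ :=
  ⟨fun h => h.exists_hasPsiRepresentation, fun ⟨_, _, h⟩ => h.isStieltjesK⟩

end LogVariable

/-! ### The kernels `Φ_n` -/

section Phi

open Real

/-- The part of `μ` on the open half-line, transported to the line by the logarithm. The factor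
`(2n)!` undoes the normalisation of `psiLog n`. -/
noncomputable def logMeasure (n : ℕ) (μ : Measure ℝ) : Measure ℝ :=
  ENNReal.ofReal ((2 * n).factorial : ℝ) • (μ.restrict (Ioi 0)).map log

variable {n : ℕ} {a x t : ℝ} {f : ℝ → ℝ} {μ : Measure ℝ}

instance [SFinite μ] : SFinite (logMeasure n μ) := by unfold logMeasure; infer_instance

lemma Phi_zero_right (hx : 0 ≤ x) : Phi n x 0 = x⁻¹ * ((2 * n).choose n : ℝ) := by
  simp [Phi, Pk, hx, Finset.sum_range_succ']

lemma Phi_eq_psiLog (hx : 0 < x) (ht : 0 < t) :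
    Phi n x t = x⁻¹ * ((2 * n).factorial * psiLog n (log x - log t)) := by
  rw [psiLog, mul_div_cancel₀ _ (by positivity), exp_sub, exp_log hx, exp_log ht, Phi, psiK,
    inv_div]
  simp only [one_le_div ht]

lemma Phi_nonneg (hx : 0 < x) (ht : 0 ≤ t) : 0 ≤ Phi n x t := by
  rcases ht.eq_or_lt with rfl | ht
  · rw [Phi_zero_right hx.le]
    positivity
  · rw [Phi_eq_psiLog hx ht]
    have := psiLog_nonneg n (log x - log t)
    positivity

@[fun_prop]
lemma measurable_Phi (n : ℕ) (x : ℝ) : Measurable (Phi n x) := by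
  unfold Phi Pkhat Pk
  exact measurable_const.mul (Measurable.ite measurableSet_Iic (by fun_prop) (by fun_prop))

lemma exists_Phi_le (n : ℕ) (hx : 0 < x) : ∃ C, 0 ≤ C ∧ ∀ t, 0 ≤ t → Phi n x t ≤ C * (1 + t)⁻¹ := by
  obtain ⟨C, hC, hψ⟩ := exists_abs_psiLog_le n
  refine ⟨x⁻¹ * ((2 * n).choose n + (2 * n).factorial * C * (1 + x)), by positivity,
    fun t ht => ?_⟩
  rw [mul_assoc]
  rcases ht.eq_or_lt with rfl | ht
  · rw [Phi_zero_right hx.le, add_zero, inv_one, mul_one]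
    gcongr
    exact le_add_of_nonneg_right (by positivity)
  have hmin : min 1 (x / t) ≤ (1 + x) * (1 + t)⁻¹ := by
    rw [← div_eq_mul_inv]
    rcases le_total t x with h | h
    · exact (min_le_left _ _).trans ((one_le_div (by positivity)).2 (by linarith))
    · exact (min_le_right _ _).trans ((div_le_div_iff₀ ht (by positivity)).2 (by nlinarith))
  rw [Phi_eq_psiLog hx ht]
  refine mul_le_mul_of_nonneg_left ?_ (inv_nonneg.2 hx.le)
  have hψx := (le_abs_self _).trans (hψ (log x - log t))
  rw [exp_sub, exp_log hx, exp_log ht] at hψx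
  calc (2 * n).factorial * psiLog n (log x - log t)
      ≤ (2 * n).factorial * (C * ((1 + x) * (1 + t)⁻¹)) := by gcongr; exact hψx.trans (by gcongr)
    _ = (2 * n).factorial * C * (1 + x) * (1 + t)⁻¹ := by ring
    _ ≤ ((2 * n).choose n + (2 * n).factorial * C * (1 + x)) * (1 + t)⁻¹ := by
        gcongr
        exact le_add_of_nonneg_left (by positivity)

lemma exists_le_Phi_succ (n : ℕ) :
    ∃ c > 0, ∀ t, 0 ≤ t → c * (1 + t)⁻¹ ≤ Phi (n + 1) 1 t := by
  obtain ⟨c, hc, hψ⟩ := exists_le_psiLog_succ n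
  refine ⟨min 1 c, by positivity, fun t ht => ?_⟩
  rcases ht.eq_or_lt with rfl | ht
  · rw [Phi_zero_right zero_le_one, add_zero, inv_one, mul_one, one_mul]
    exact (min_le_left _ _).trans (by exact_mod_cast Nat.choose_pos (by lia))
  have hψt := hψ (log 1 - log t)
  rw [exp_sub, exp_log one_pos, exp_log ht, one_div] at hψt
  rw [Phi_eq_psiLog one_pos ht, inv_one, one_mul]
  calc min 1 c * (1 + t)⁻¹ ≤ c * min 1 t⁻¹ := by
        gcongr
        · exact min_le_right _ _
        · exact le_min (inv_le_one_of_one_le₀ (by linarith)) (inv_anti₀ ht (by linarith))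
    _ ≤ psiLog (n + 1) (log 1 - log t) := hψt
    _ ≤ _ := le_mul_of_one_le_left (psiLog_nonneg _ _) (by exact_mod_cast Nat.factorial_pos _)

lemma ae_nonneg_of_measure_Iio_eq_zero (hμ : μ (Iio 0) = 0) : ∀ᵐ t ∂μ, 0 ≤ t :=
  (measure_eq_zero_iff_ae_notMem.1 hμ).mono fun _ => notMem_Iio.1

lemma lintegral_Phi_ne_top (hμ0 : μ (Iio 0) = 0)
    (hμ : ∫⁻ t, ENNReal.ofReal (1 + t)⁻¹ ∂μ < ⊤) (hx : 0 < x) :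
    ∫⁻ t, ENNReal.ofReal (Phi n x t) ∂μ ≠ ⊤ := by
  obtain ⟨C, hC, hΦ⟩ := exists_Phi_le n hx
  refine ne_top_of_le_ne_top (ENNReal.mul_ne_top (ENNReal.ofReal_ne_top (r := C)) hμ.ne) ?_
  rw [← lintegral_const_mul _ (by fun_prop)]
  refine lintegral_mono_ae ?_
  filter_upwards [ae_nonneg_of_measure_Iio_eq_zero hμ0] with t ht
  rw [← ENNReal.ofReal_mul hC]
  exact ENNReal.ofReal_le_ofReal (hΦ t ht)

lemma lintegral_inv_one_add_lt_top (hμ0 : μ (Iio 0) = 0)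
    (hΦ : ∫⁻ t, ENNReal.ofReal (Phi (n + 1) 1 t) ∂μ ≠ ⊤) :
    ∫⁻ t, ENNReal.ofReal (1 + t)⁻¹ ∂μ < ⊤ := by
  obtain ⟨c, hc, hle⟩ := exists_le_Phi_succ n
  refine (ENNReal.mul_ne_top (ENNReal.ofReal_ne_top (r := c⁻¹)) hΦ).lt_top.trans_le' ?_
  rw [← lintegral_const_mul _ (by fun_prop)]
  refine lintegral_mono_ae ?_
  filter_upwards [ae_nonneg_of_measure_Iio_eq_zero hμ0] with t ht
  rw [← ENNReal.ofReal_mul (by positivity)]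
  refine ENNReal.ofReal_le_ofReal ?_
  rw [← div_eq_inv_mul, le_div_iff₀' hc]
  exact hle t ht

lemma sFinite_of_lintegral_ofReal_ne_top {α : Type*} [MeasurableSpace α] {ν : Measure α}
    {φ : α → ℝ} (hφ : Measurable φ) (hpos : ∀ᵐ t ∂ν, 0 < φ t)
    (hν : ∫⁻ t, ENNReal.ofReal (φ t) ∂ν ≠ ⊤) : SFinite ν := by
  have := isFiniteMeasure_withDensity hν
  rw [← withDensity_inv_same hφ.ennreal_ofReal
    (hpos.mono fun t ht => (ENNReal.ofReal_pos.2 ht).ne') (by simp)]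
  infer_instance

/-- Both sides force the integrals of `Φ` to be finite, so that the Bochner integrals do not take
their junk value. -/
lemma integral_Phi_representation_iff (hf : ∀ x > 0, 0 ≤ f x) (ha : 0 ≤ a)
    (hμ0 : μ (Iio 0) = 0) :
    ((∫⁻ t, ENNReal.ofReal (1 + t)⁻¹ ∂μ) < ⊤ ∧
        ∀ x > 0, f x = a + ∫ t, Phi (n + 1) x t ∂μ) ↔
      ∀ x > 0, ENNReal.ofReal (f x)
        = ENNReal.ofReal a + ∫⁻ t, ENNReal.ofReal (Phi (n + 1) x t) ∂μ := by
  have hint (x : ℝ) (hx : 0 < x) : ∫ t, Phi (n + 1) x t ∂μ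
      = (∫⁻ t, ENNReal.ofReal (Phi (n + 1) x t) ∂μ).toReal :=
    integral_eq_lintegral_of_nonneg_ae
      ((ae_nonneg_of_measure_Iio_eq_zero hμ0).mono fun t ht => Phi_nonneg hx ht) (by fun_prop)
  constructor
  · rintro ⟨hμ, h⟩ x hx
    rw [h x hx, hint x hx, ENNReal.ofReal_add ha ENNReal.toReal_nonneg,
      ENNReal.ofReal_toReal (lintegral_Phi_ne_top hμ0 hμ hx)]
  · intro h
    have hfin (x : ℝ) (hx : 0 < x) : ∫⁻ t, ENNReal.ofReal (Phi (n + 1) x t) ∂μ ≠ ⊤ :=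
      ne_top_of_le_ne_top ENNReal.ofReal_ne_top (h x hx ▸ le_add_self)
    refine ⟨lintegral_inv_one_add_lt_top hμ0 (hfin 1 one_pos), fun x hx => ?_⟩
    rw [hint x hx, ← ENNReal.toReal_ofReal (hf x hx), h x hx,
      ENNReal.toReal_add ENNReal.ofReal_ne_top (hfin x hx), ENNReal.toReal_ofReal ha]

lemma ofReal_exp_mul_lintegral_Phi (hμ0 : μ (Iio 0) = 0) (s : ℝ) :
    ENNReal.ofReal (exp s) * ∫⁻ t, ENNReal.ofReal (Phi n (exp s) t) ∂μ
      = (2 * n).choose n * μ {0} + psiPotential n (logMeasure n μ) s := by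
  have hrestrict : μ.restrict (Ici 0) = μ :=
    Measure.restrict_eq_self_of_ae_mem (ae_nonneg_of_measure_Iio_eq_zero hμ0)
  rw [← lintegral_const_mul _ (by fun_prop)]
  conv_lhs => rw [← hrestrict]
  rw [← Ioi_insert, insert_eq, lintegral_union measurableSet_Ioi (by simp), lintegral_singleton]
  congr 1
  · rw [← ENNReal.ofReal_mul (exp_pos s).le, Phi_zero_right (exp_pos s).le,
      mul_inv_cancel_left₀ (exp_pos s).ne', ENNReal.ofReal_natCast]
  · rw [psiPotential, logMeasure, lintegral_smul_measure, lintegral_map (by fun_prop) (by fun_prop),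
      smul_eq_mul, ← lintegral_const_mul _ (by fun_prop)]
    refine setLIntegral_congr_fun measurableSet_Ioi fun t (ht : 0 < t) => ?_
    rw [← ENNReal.ofReal_mul (exp_pos s).le, ← ENNReal.ofReal_mul (by positivity),
      Phi_eq_psiLog (exp_pos s) ht, mul_inv_cancel_left₀ (exp_pos s).ne', log_exp]

lemma exists_logMeasure_eq (n : ℕ) (c : ENNReal) (σ : Measure ℝ) :
    ∃ μ : Measure ℝ, μ (Iio 0) = 0 ∧ μ {0} = c ∧ logMeasure n μ = σ := by
  have hfac : ENNReal.ofReal ((2 * n).factorial : ℝ) ≠ 0 := by simp [Nat.factorial_ne_zero]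
  have hneg : exp ⁻¹' Iio 0 = ∅ := by ext; simp [(exp_pos _).le]
  have hzero : exp ⁻¹' {0} = ∅ := by ext; simp
  have hpos : exp ⁻¹' Ioi 0 = univ := by ext; simp [exp_pos]
  refine ⟨c • Measure.dirac 0
    + (ENNReal.ofReal ((2 * n).factorial : ℝ))⁻¹ • σ.map exp, ?_, ?_, ?_⟩
  · simp [Measure.map_apply measurable_exp, hneg]
  · simp [Measure.map_apply measurable_exp, hzero]
  · rw [logMeasure, Measure.restrict_add, Measure.restrict_smul, Measure.restrict_smul,
      Measure.restrict_map measurable_exp measurableSet_Ioi, hpos, Measure.restrict_univ,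
      restrict_dirac' measurableSet_Ioi, if_neg (by simp), smul_zero, zero_add,
      Measure.map_smul, Measure.map_map measurable_log measurable_exp, smul_smul,
      ENNReal.mul_inv_cancel hfac ENNReal.ofReal_ne_top, one_smul]
    simp [Function.comp_def]

theorem lintegral_Phi_representation_iff (hμ0 : μ (Iio 0) = 0) :
    (∀ x > 0, ENNReal.ofReal (f x)
        = ENNReal.ofReal a + ∫⁻ t, ENNReal.ofReal (Phi n x t) ∂μ) ↔
      ∀ s, ENNReal.ofReal (exp s * f (exp s)) = (2 * n).choose n * μ {0}
        + ENNReal.ofReal (a * exp s) + psiPotential n (logMeasure n μ) s := by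
  have hlog (s : ℝ) : ENNReal.ofReal (f (exp s))
        = ENNReal.ofReal a + ∫⁻ t, ENNReal.ofReal (Phi n (exp s) t) ∂μ ↔
      ENNReal.ofReal (exp s * f (exp s)) = (2 * n).choose n * μ {0}
        + ENNReal.ofReal (a * exp s) + psiPotential n (logMeasure n μ) s := by
    rw [add_right_comm, ← ofReal_exp_mul_lintegral_Phi hμ0, mul_comm a,
      ENNReal.ofReal_mul (exp_pos s).le, ENNReal.ofReal_mul (exp_pos s).le, ← mul_add, add_comm,
      ENNReal.mul_right_inj (ENNReal.ofReal_pos.2 (exp_pos s)).ne' ENNReal.ofReal_ne_top]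
  exact ⟨fun h s => (hlog s).1 (h _ (exp_pos s)),
    fun h x hx => by simpa only [exp_log hx] using (hlog (log x)).2 (h (log x))⟩

theorem exists_hasPsiRepresentation_succ_iff (hf : ∀ x > 0, 0 ≤ f x) :
    (∃ σ, SFinite σ ∧ HasPsiRepresentation (n + 1) (fun s => exp s * f (exp s)) σ) ↔
      ∃ a, ∃ μ : Measure ℝ, 0 ≤ a ∧ μ (Iio 0) = 0 ∧
        (∫⁻ t, ENNReal.ofReal (1 + t)⁻¹ ∂μ) < ⊤ ∧
        ∀ x > 0, f x = a + ∫ t, Phi (n + 1) x t ∂μ := by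
  have hchoose : ((2 * (n + 1)).choose (n + 1) : ENNReal) ≠ 0 :=
    Nat.cast_ne_zero.2 (Nat.choose_pos (by lia)).ne'
  constructor
  · rintro ⟨σ, -, -, c, a, hc, ha, -, hu⟩
    obtain ⟨μ, hμ0, hμc, rfl⟩ := exists_logMeasure_eq (n + 1)
      (ENNReal.ofReal c / (2 * (n + 1)).choose (n + 1)) σ
    refine ⟨a, μ, ha, hμ0, (integral_Phi_representation_iff hf ha hμ0).2 <|
      (lintegral_Phi_representation_iff hμ0).2 fun s => ?_⟩
    rw [hμc, ENNReal.mul_div_cancel hchoose (ENNReal.natCast_ne_top _), hu,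
      ENNReal.ofReal_add hc (mul_nonneg ha (exp_pos s).le)]
  · rintro ⟨a, μ, ha, hμ0, hμ, h⟩
    have hlog := (lintegral_Phi_representation_iff hμ0).1 <|
      (integral_Phi_representation_iff hf ha hμ0).1 ⟨hμ, h⟩
    have hsf : SFinite μ := sFinite_of_lintegral_ofReal_ne_top (by fun_prop)
      ((ae_nonneg_of_measure_Iio_eq_zero hμ0).mono fun t ht => by positivity) hμ.ne
    have hatom : (2 * (n + 1)).choose (n + 1) * μ {0} ≠ ⊤ :=
      ne_top_of_le_ne_top ENNReal.ofReal_ne_top (hlog 0 ▸ le_add_of_le_left le_self_add)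
    refine ⟨logMeasure (n + 1) μ, inferInstance,
      fun s => mul_nonneg (exp_pos s).le (hf _ (exp_pos s)),
      ((2 * (n + 1)).choose (n + 1) * μ {0}).toReal, a, ENNReal.toReal_nonneg, ha, by simp,
      fun s => ?_⟩
    rw [hlog, ENNReal.ofReal_add ENNReal.toReal_nonneg (mul_nonneg ha (exp_pos s).le),
      ENNReal.ofReal_toReal hatom]

end Phi

/-- Theorem 1: a function `f : (0,∞) → [0,∞)` is `k`-Stieltjes iff it is
`a + ∫ Φ_{k-1}(x,t) μ(dt)` for some `a ≥ 0` and nonnegative measure `μ` on `[0,∞)`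
integrating `(1+t)⁻¹`. -/
theorem stieltjes_finite_order_representation (k : ℕ) (hk : 2 ≤ k) (f : ℝ → ℝ)
    (hf : ∀ x > 0, 0 ≤ f x) :
    IsStieltjesK k f ↔
      ∃ (a : ℝ) (μ : Measure ℝ), 0 ≤ a ∧ μ (Iio 0) = 0 ∧
        (∫⁻ t, ENNReal.ofReal ((1 + t)⁻¹) ∂μ) < ⊤ ∧
        ∀ x > 0, f x = a + ∫ t, Phi (k - 1) x t ∂μ := by
  obtain ⟨p, rfl⟩ : ∃ p, k = p + 2 := ⟨k - 2, by lia⟩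
  rw [isStieltjesK_iff_exists_hasPsiRepresentation]
  exact exists_hasPsiRepresentation_succ_iff hf
end

section
/- For every integer k ≥ 1 and every t > 0, the function x ↦ Φ_k(x,t) on (0,∞) belongs to S_{k+1}, i.e. it is of class C^{2k−1}, satisfies (−1)^{n−1} d^{2n−1}/dx^{2n−1} ( x^n Φ_k(x,t) ) ≥ 0 on (0,∞) for n = 1,…,k, and x ↦ (−1)^k d^{2k−1}/dx^{2k−1} ( x^{k+1} Φ_k(x,t) ) is convex on (0,∞). -/
open Set MeasureTheory Filter

open scoped Topology Nat

/-! Put `p = n - 1` and `h z = z ^ p * P_k z`. On `x < t` the function `x ^ n Φ_k(x,t)` is, up to a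
multiple of `x ^ p`, the negative of `t ^ p h(x / t)`. On `x > t` it is
`t ^ (-p) x ^ (2 * p) h(t / x)`, and the `(2 * p + 1)`-st derivative of `x ^ (2 * p) f(1 / x)` is
`-x ^ (-(2 * p + 2)) f^(2 * p + 1)(1 / x)`. On both branches the claim therefore reduces to the sign
of `h^(2 * p + 1)` on `(-∞, 1]`, which Euler's Beta integral makes visible:
`h^(2 * p + 1)(z)` is `(-1) ^ (p + 1)` times a positive multiple of
`∫₀¹ u ^ (2 * p + 1) (1 - u) ^ (k - p - 1) (1 - z * u) ^ (k - p - 1) du`.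

With `Q_k = P_k - P_k(0)`, the symmetry of the binomial coefficients gives
`(1 - z) ^ (2 * k) = (-z) ^ k (P_k(z) + Q_k(1 / z))`, so `x ^ (k + 1) Φ_k(x,t)` is
`(x - t)₊ ^ (2 * k) / (-t) ^ k` minus a polynomial of degree at most `2 * k`.
This yields both the smoothness across `x = t` and the convexity. -/

section Calculus

variable {𝕜 : Type*} [NontriviallyNormedField 𝕜]

lemma iteratedDeriv_succ_id_mul {n : ℕ} {g : 𝕜 → 𝕜} {x : 𝕜}
    (hg : ContDiffAt 𝕜 (n + 1 : ℕ) g x) :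
    iteratedDeriv (n + 1) (fun y ↦ y * g y) x
      = x * iteratedDeriv (n + 1) g x + (n + 1) * iteratedDeriv n g x := by
  rw [iteratedDeriv_fun_mul (f := fun y ↦ y) contDiffAt_id hg,
    Finset.sum_range_succ', Finset.sum_range_succ']
  simp [iteratedDeriv_fun_id, add_comm]

lemma hasDerivAt_iteratedDeriv {n : ℕ} {f : 𝕜 → 𝕜} {x : 𝕜}
    (hf : ContDiffAt 𝕜 (n + 1 : ℕ) f x) :
    HasDerivAt (iteratedDeriv n f) (iteratedDeriv (n + 1) f x) x := by
  have hdiff := hf.contDiffWithinAt.differentiableWithinAt_iteratedDerivWithin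
    (m := n) (s := univ) (by norm_cast; omega) (by simp)
  rw [iteratedDerivWithin_univ, differentiableWithinAt_univ] at hdiff
  rw [iteratedDeriv_succ]
  exact hdiff.hasDerivAt

lemma iteratedDeriv_succ_pow_mul_comp_inv {m : ℕ} {f : 𝕜 → 𝕜} {x : 𝕜} (hx : x ≠ 0)
    (hf : ContDiffAt 𝕜 (m + 1 : ℕ) f x⁻¹) :
    iteratedDeriv (m + 1) (fun y ↦ y ^ m * f y⁻¹) x
      = (-1) ^ (m + 1) * x⁻¹ ^ (m + 2) * iteratedDeriv (m + 1) f x⁻¹ := by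
  induction m generalizing x with
  | zero =>
    have hderiv := (hf.differentiableAt (by simp)).hasDerivAt.scomp x (hasDerivAt_inv hx)
    simpa [Function.comp_def] using hderiv.deriv
  | succ m ih =>
    set g : 𝕜 → 𝕜 := fun y ↦ y ^ m * f y⁻¹ with hg_def
    have hg : ContDiffAt 𝕜 (m + 1 + 1 : ℕ) g x :=
      contDiffAt_id.pow m |>.mul (hf.comp x (contDiffAt_inv 𝕜 hx))
    have hlower : iteratedDeriv (m + 1) g =ᶠ[𝓝 x]
        fun y ↦ (-1) ^ (m + 1) * (y⁻¹ ^ (m + 2) * iteratedDeriv (m + 1) f y⁻¹) := by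
      filter_upwards [eventually_ne_nhds hx,
        (continuousAt_inv₀ hx).eventually (hf.eventually (by simp))] with y hy hfy
      rw [ih hy (hfy.of_le (by norm_cast; omega)), mul_assoc]
    have htop : iteratedDeriv (m + 2) g x = (-1) ^ (m + 2) * x⁻¹ ^ 2 *
        ((m + 2) * x⁻¹ ^ (m + 1) * iteratedDeriv (m + 1) f x⁻¹
          + x⁻¹ ^ (m + 2) * iteratedDeriv (m + 2) f x⁻¹) := by
      have hDf := hasDerivAt_iteratedDeriv hf
      have hG := ((((hasDerivAt_id x⁻¹).pow (m + 2)).mul hDf).scomp x (hasDerivAt_inv hx)).const_mul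
        ((-1 : 𝕜) ^ (m + 1))
      rw [iteratedDeriv_succ, hlower.deriv_eq]
      refine Eq.trans hG.deriv ?_
      simp only [Nat.cast_add, Nat.cast_ofNat, id_eq, Nat.add_one_sub_one, inv_pow, mul_one,
        Pi.pow_apply, smul_eq_mul, neg_mul, mul_neg]
      ring
    have hshift : (fun y ↦ y ^ (m + 1) * f y⁻¹) = fun y ↦ y * g y := by
      funext y; simp only [hg_def]; ring
    rw [hshift, iteratedDeriv_succ_id_mul hg, htop, hlower.eq_of_nhds]
    have hcancel : x * x⁻¹ = 1 := mul_inv_cancel₀ hx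
    push_cast
    linear_combination ((-1) ^ m * x⁻¹ ^ (m + 2) * ((m + 2) * iteratedDeriv (m + 1) f x⁻¹
      + x⁻¹ * iteratedDeriv (m + 2) f x⁻¹)) * hcancel

end Calculus

section Polynomial

open Polynomial

lemma iteratedDeriv_eval {𝕜 : Type*} [NontriviallyNormedField 𝕜] (n : ℕ) (p : 𝕜[X]) :
    iteratedDeriv n (fun x ↦ p.eval x) = fun x ↦ (derivative^[n] p).eval x := by
  induction n with
  | zero => simp
  | succ n ih =>
    funext x
    rw [iteratedDeriv_succ, ih, Polynomial.deriv, Function.iterate_succ_apply']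

lemma convexOn_iteratedDeriv_eval {n : ℕ} {p : ℝ[X]} (hp : p.natDegree ≤ n + 1) :
    ConvexOn ℝ univ (iteratedDeriv n fun x ↦ p.eval x) := by
  obtain ⟨a, b, hab⟩ := exists_eq_X_add_C_of_natDegree_le_one
    ((natDegree_iterate_derivative p n).trans (by omega : p.natDegree - n ≤ 1))
  have haffine : iteratedDeriv n (fun x ↦ p.eval x) = fun x ↦ LinearMap.mul ℝ ℝ a x + b := by
    simp [iteratedDeriv_eval, hab]
  rw [haffine]
  exact ((LinearMap.mul ℝ ℝ a).convexOn convex_univ).add_const b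

end Polynomial

section TruncatedPower

lemma hasDerivAt_max_zero_pow (n : ℕ) (x : ℝ) :
    HasDerivAt (fun y : ℝ ↦ max y 0 ^ (n + 2)) ((n + 2 : ℕ) * max x 0 ^ (n + 1)) x := by
  refine hasDerivAt_of_hasDerivAt_of_ne' (x := 0)
    (g := fun y : ℝ ↦ (n + 2 : ℕ) * max y 0 ^ (n + 1)) (fun y hy ↦ ?_)
    (by fun_prop) (by fun_prop) x
  rcases hy.lt_or_gt with hneg | hpos
  · have hzero : (fun z : ℝ ↦ max z 0 ^ (n + 2)) =ᶠ[𝓝 y] fun _ ↦ 0 := by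
      filter_upwards [Iio_mem_nhds hneg] with z hz
      simp [max_eq_right (mem_Iio.1 hz).le]
    simpa [max_eq_right hneg.le] using (hasDerivAt_const y (0 : ℝ)).congr_of_eventuallyEq hzero
  · have hpow : (fun z : ℝ ↦ max z 0 ^ (n + 2)) =ᶠ[𝓝 y] fun z ↦ z ^ (n + 2) := by
      filter_upwards [Ioi_mem_nhds hpos] with z hz
      rw [max_eq_left (mem_Ioi.1 hz).le]
    simpa [max_eq_left hpos.le] using (hasDerivAt_pow (n + 2) y).congr_of_eventuallyEq hpow

lemma deriv_max_zero_pow (n : ℕ) :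
    deriv (fun y : ℝ ↦ max y 0 ^ (n + 2)) = fun x : ℝ ↦ (n + 2 : ℕ) * max x 0 ^ (n + 1) :=
  funext fun x ↦ (hasDerivAt_max_zero_pow n x).deriv

lemma contDiff_max_zero_pow_succ (n : ℕ) : ContDiff ℝ n fun y : ℝ ↦ max y 0 ^ (n + 1) := by
  induction n with
  | zero =>
    rw [Nat.cast_zero, contDiff_zero]
    fun_prop
  | succ n ih =>
    rw [Nat.cast_succ, contDiff_succ_iff_deriv, deriv_max_zero_pow]
    exact ⟨fun x ↦ (hasDerivAt_max_zero_pow n x).differentiableAt, by simp, contDiff_const.mul ih⟩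

lemma iteratedDeriv_max_zero_pow (m n : ℕ) :
    iteratedDeriv m (fun y : ℝ ↦ max y 0 ^ (n + m + 1))
      = fun x : ℝ ↦ (n + m + 1).descFactorial m * max x 0 ^ (n + 1) := by
  induction m with
  | zero => simp
  | succ m ih =>
    funext x
    rw [iteratedDeriv_succ', show n + (m + 1) + 1 = n + m + 2 by ring, deriv_max_zero_pow,
      iteratedDeriv_const_mul_field, ih, Nat.succ_descFactorial_succ]
    push_cast
    ring

lemma contDiff_max_sub_pow_succ (n : ℕ) (t : ℝ) : ContDiff ℝ n fun y ↦ max (y - t) 0 ^ (n + 1) :=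
  (contDiff_max_zero_pow_succ n).comp (contDiff_id.sub contDiff_const)

lemma convexOn_max_sub_zero (t : ℝ) : ConvexOn ℝ univ fun x : ℝ ↦ max (x - t) 0 :=
  ((convexOn_id convex_univ).sub (concaveOn_const t convex_univ)).sup
    (convexOn_const 0 convex_univ)

lemma convexOn_iteratedDeriv_max_sub_pow (n : ℕ) (t : ℝ) :
    ConvexOn ℝ univ (iteratedDeriv n fun y ↦ max (y - t) 0 ^ (n + 1)) := by
  have hderiv : iteratedDeriv n (fun y ↦ max (y - t) 0 ^ (n + 1))
      = fun x ↦ ((n + 1).descFactorial n : ℝ) • max (x - t) 0 := by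
    funext x
    have h := congrFun (iteratedDeriv_max_zero_pow n 0) (x - t)
    rw [zero_add, zero_add, pow_one] at h
    rw [smul_eq_mul, ← h]
    exact congrFun (iteratedDeriv_comp_sub_const n (fun y ↦ max y 0 ^ (n + 1)) t) x
  rw [hderiv]
  exact (convexOn_max_sub_zero t).smul (Nat.cast_nonneg _)

end TruncatedPower

section EulerIntegral

lemma integral_pow_mul_one_sub_pow (a b : ℕ) :
    ∫ u in (0 : ℝ)..1, u ^ a * (1 - u) ^ b = (a ! * b ! : ℝ) / (a + b + 1)! := by
  have hbeta : Complex.betaIntegral (a + 1) (b + 1) = (a ! * b ! : ℂ) / (a + b + 1)! := by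
    have hre : ∀ n : ℕ, 0 < (n + 1 : ℂ).re := fun n ↦ by
      rw [Complex.add_re, Complex.natCast_re, Complex.one_re]
      positivity
    rw [Complex.betaIntegral_eq_Gamma_mul_div _ _ (hre a) (hre b),
      show (a + 1 + (b + 1) : ℂ) = (a + b + 1 : ℕ) + 1 by push_cast; ring]
    simp only [Complex.Gamma_nat_eq_factorial]
  rw [Complex.betaIntegral] at hbeta
  simp only [add_sub_cancel_right, Complex.cpow_natCast] at hbeta
  rw [← Complex.ofReal_inj, ← intervalIntegral.integral_ofReal]
  push_cast
  exact hbeta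

lemma integral_pow_mul_one_sub_pow_mul_one_sub_mul_pow (a b N : ℕ) (z : ℝ) :
    ∫ u in (0 : ℝ)..1, u ^ a * (1 - u) ^ b * (1 - z * u) ^ N
      = ∑ j ∈ Finset.range (N + 1),
          N.choose j * ((a + j)! * b ! / (a + j + b + 1)!) * (-z) ^ j := by
  have hexpand : ∀ u : ℝ, u ^ a * (1 - u) ^ b * (1 - z * u) ^ N
      = ∑ j ∈ Finset.range (N + 1), N.choose j * (-z) ^ j * (u ^ (a + j) * (1 - u) ^ b) := by
    intro u
    rw [show 1 - z * u = -z * u + 1 by ring, add_pow, Finset.mul_sum]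
    exact Finset.sum_congr rfl fun j _ ↦ by rw [one_pow, mul_pow]; ring
  simp only [hexpand]
  rw [intervalIntegral.integral_finsetSum
    fun j _ ↦ Continuous.intervalIntegrable (by fun_prop) _ _]
  refine Finset.sum_congr rfl fun j _ ↦ ?_
  rw [intervalIntegral.integral_const_mul, integral_pow_mul_one_sub_pow]
  ring

lemma integral_pow_mul_one_sub_pow_mul_one_sub_mul_pow_nonneg (a b N : ℕ) {z : ℝ} (hz : z ≤ 1) :
    0 ≤ ∫ u in (0 : ℝ)..1, u ^ a * (1 - u) ^ b * (1 - z * u) ^ N := by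
  refine intervalIntegral.integral_nonneg zero_le_one fun u ⟨hu0, hu1⟩ ↦ ?_
  have hzu : 0 ≤ 1 - z * u := by nlinarith
  exact mul_nonneg (mul_nonneg (pow_nonneg hu0 _) (pow_nonneg (sub_nonneg.2 hu1) _))
    (pow_nonneg hzu _)

end EulerIntegral

section PolynomialPk

open Polynomial

@[fun_prop]
lemma contDiff_Pk (k : ℕ) {n : WithTop ℕ∞} : ContDiff ℝ n (Pk k) := by
  unfold Pk
  fun_prop

@[fun_prop]
lemma contDiff_Pkhat (k : ℕ) {n : WithTop ℕ∞} : ContDiff ℝ n (Pkhat k) := by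
  unfold Pkhat
  fun_prop

lemma exists_polynomial_eval_eq_Pk (k : ℕ) :
    ∃ p : ℝ[X], p.natDegree ≤ k ∧ ∀ x, p.eval x = Pk k x := by
  refine ⟨∑ n ∈ Finset.range (k + 1), C ((2 * k).choose (n + k) : ℝ) * (-X) ^ n,
    natDegree_sum_le_of_forall_le _ _ fun n hn ↦ ?_, fun x ↦ ?_⟩
  · have hnk : n ≤ k := Nat.lt_succ_iff.1 (Finset.mem_range.1 hn)
    refine (natDegree_C_mul_le _ _).trans (natDegree_pow_le.trans ?_)
    simpa using hnk
  · simp [Pk, eval_finsetSum]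

lemma Pkhat_eq_sum (k : ℕ) (x : ℝ) :
    Pkhat k x = ∑ m ∈ Finset.range k, (2 * k).choose (m + 1 + k) * (-x) ^ (m + 1) := by
  simp [Pkhat, Pk, Finset.sum_range_succ' _ k]

lemma one_sub_pow_eq_mul_Pk_add_Pkhat_inv (k : ℕ) {z : ℝ} (hz : z ≠ 0) :
    (1 - z) ^ (2 * k) = (-z) ^ k * (Pk k z + Pkhat k z⁻¹) := by
  have hbinom := add_pow (-z) 1 (2 * k)
  rw [show 2 * k + 1 = k + (k + 1) by ring, Finset.sum_range_add, ← Finset.sum_range_reflect]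
    at hbinom
  rw [show 1 - z = -z + 1 by ring, hbinom, add_comm, mul_add, Pkhat_eq_sum, Pk,
    Finset.mul_sum, Finset.mul_sum]
  congr 1 <;> refine Finset.sum_congr rfl fun m hm ↦ ?_
  · rw [one_pow, add_comm m k, pow_add]
    ring
  · obtain ⟨q, rfl⟩ := Nat.exists_eq_add_of_lt (Finset.mem_range.1 hm)
    have hcancel : (-z) ^ (m + 1) * (-z⁻¹) ^ (m + 1) = 1 := by
      rw [← mul_pow, neg_mul_neg, mul_inv_cancel₀ hz, one_pow]
    rw [Nat.choose_symm_of_eq_add (by omega : 2 * (m + q + 1) = m + 1 + (m + q + 1) + q),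
      show m + q + 1 - 1 - m = q by omega, add_right_comm m q 1, pow_add (-z) (m + 1), one_pow]
    linear_combination (-((-z) ^ q * (2 * (m + 1 + q)).choose q)) * hcancel

lemma choose_mul_descFactorial_eq (p N j : ℕ) (hj : j ≤ N) :
    ((2 * (p + N + 1)).choose (p + 1 + j + (p + N + 1))
        * (p + 1 + j + p).descFactorial (2 * p + 1) : ℝ)
      = (2 * (p + N + 1))! / N ! ^ 2 *
        (N.choose j * ((2 * p + 1 + j)! * N ! / (2 * p + 1 + j + N + 1)!)) := by
  obtain ⟨i, rfl⟩ := Nat.exists_eq_add_of_le hj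
  have hdesc := Nat.factorial_mul_descFactorial (show 2 * p + 1 ≤ 2 * p + 1 + j by omega)
  rw [Nat.add_sub_cancel_left] at hdesc
  rw [show 2 * (p + (j + i) + 1) = (2 * p + 1 + j + (j + i) + 1) + i by ring,
    show p + 1 + j + (p + (j + i) + 1) = 2 * p + 1 + j + (j + i) + 1 by ring,
    show p + 1 + j + p = 2 * p + 1 + j by ring, Nat.cast_add_choose, Nat.cast_add_choose, ← hdesc]
  push_cast
  field_simp

lemma iteratedDeriv_pow_mul_Pk_eq_sum (p N : ℕ) (z : ℝ) :
    iteratedDeriv (2 * p + 1) (fun y ↦ y ^ p * Pk (p + N + 1) y) z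
      = (-1) ^ (p + 1) * ∑ j ∈ Finset.range (N + 1),
          (2 * (p + N + 1)).choose (p + 1 + j + (p + N + 1))
            * (p + 1 + j + p).descFactorial (2 * p + 1) * (-z) ^ j := by
  have hexpand : (fun y ↦ y ^ p * Pk (p + N + 1) y) = fun y ↦ ∑ m ∈ Finset.range (p + N + 1 + 1),
      ((2 * (p + N + 1)).choose (m + (p + N + 1)) * (-1) ^ m : ℝ) * y ^ (m + p) := by
    funext y
    rw [Pk, Finset.mul_sum]
    refine Finset.sum_congr rfl fun m _ ↦ ?_
    rw [neg_pow]
    ring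
  rw [hexpand, iteratedDeriv_fun_sum fun m _ ↦ by fun_prop]
  simp only [iteratedDeriv_const_mul_field, iteratedDeriv_pow]
  rw [show p + N + 1 + 1 = (p + 1) + (N + 1) by ring, Finset.sum_range_add,
    Finset.sum_eq_zero fun m hm ↦ ?_, zero_add, Finset.mul_sum]
  · refine Finset.sum_congr rfl fun j _ ↦ ?_
    rw [show p + 1 + j + p - (2 * p + 1) = j by omega, neg_pow z]
    ring
  · have hmp : m + p < 2 * p + 1 := by have := Finset.mem_range.1 hm; omega
    rw [Nat.descFactorial_eq_zero_iff_lt.2 hmp, Nat.cast_zero, zero_mul, mul_zero]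

lemma iteratedDeriv_pow_mul_Pk_eq_integral (p N : ℕ) (z : ℝ) :
    iteratedDeriv (2 * p + 1) (fun y ↦ y ^ p * Pk (p + N + 1) y) z
      = (-1) ^ (p + 1) * ((2 * (p + N + 1))! / N ! ^ 2 *
          ∫ u in (0 : ℝ)..1, u ^ (2 * p + 1) * (1 - u) ^ N * (1 - z * u) ^ N) := by
  rw [iteratedDeriv_pow_mul_Pk_eq_sum, integral_pow_mul_one_sub_pow_mul_one_sub_mul_pow,
    Finset.mul_sum _ _ ((_ : ℝ) / _)]
  congr 1
  refine Finset.sum_congr rfl fun j hj ↦ ?_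
  rw [choose_mul_descFactorial_eq p N j (Nat.lt_succ_iff.1 (Finset.mem_range.1 hj)), mul_assoc]

lemma neg_one_pow_mul_iteratedDeriv_pow_mul_Pk_nonneg {p k : ℕ} (hpk : p < k) {z : ℝ}
    (hz : z ≤ 1) :
    0 ≤ (-1) ^ (p + 1) * iteratedDeriv (2 * p + 1) (fun y ↦ y ^ p * Pk k y) z := by
  obtain ⟨N, rfl⟩ := Nat.exists_eq_add_of_lt hpk
  rw [iteratedDeriv_pow_mul_Pk_eq_integral, ← mul_assoc, ← mul_pow, neg_one_mul, neg_neg, one_pow,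
    one_mul]
  exact mul_nonneg (by positivity)
    (integral_pow_mul_one_sub_pow_mul_one_sub_mul_pow_nonneg _ _ _ hz)

end PolynomialPk

section Kernel

open Polynomial

variable {x t : ℝ}

lemma pow_succ_mul_Phi_of_lt (k p : ℕ) (hx : x ≠ 0) (hxt : x < t) :
    x ^ (p + 1) * Phi k x t = (2 * k).choose k * x ^ p - x ^ p * Pk k (x / t) := by
  rw [Phi, if_neg hxt.not_ge, Pkhat]
  field_simp
  ring

lemma pow_succ_mul_Phi_of_le (k p : ℕ) (hx : x ≠ 0) (htx : t ≤ x) :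
    x ^ (p + 1) * Phi k x t = x ^ p * Pk k (t / x) := by
  rw [Phi, if_pos htx]
  field_simp
  ring

lemma pow_succ_mul_Phi_eq_max_pow_sub {k : ℕ} (hk : k ≠ 0) (hx : x ≠ 0) (ht : t ≠ 0) :
    x ^ (k + 1) * Phi k x t = max (x - t) 0 ^ (2 * k) / (-t) ^ k - x ^ k * Pkhat k (x / t) := by
  rcases lt_or_ge x t with hxt | htx
  · rw [pow_succ_mul_Phi_of_lt k k hx hxt, max_eq_right (sub_nonpos.2 hxt.le),
      zero_pow (by omega), Pkhat]
    ring
  · have hsymm := one_sub_pow_eq_mul_Pk_add_Pkhat_inv k (div_ne_zero ht hx)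
    rw [inv_div, one_sub_div hx, ← neg_div, div_pow, div_pow] at hsymm
    rw [pow_succ_mul_Phi_of_le k k hx htx, max_eq_left (sub_nonneg.2 htx), eq_sub_iff_add_eq,
      eq_div_iff (pow_ne_zero k (neg_ne_zero.2 ht))]
    rw [div_eq_iff (pow_ne_zero _ hx), show x ^ (2 * k) = x ^ k * x ^ k by ring] at hsymm
    rw [hsymm]
    field_simp

lemma contDiffOn_Phi {k : ℕ} (hk : k ≠ 0) (ht : t ≠ 0) :
    ContDiffOn ℝ (2 * k - 1 : ℕ) (fun x ↦ Phi k x t) (Ioi 0) := by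
  have hmax := contDiff_max_sub_pow_succ (2 * k - 1) t
  rw [show 2 * k - 1 + 1 = 2 * k by omega] at hmax
  have hquot : ContDiffOn ℝ (2 * k - 1 : ℕ) (fun x ↦
      (max (x - t) 0 ^ (2 * k) / (-t) ^ k - x ^ k * Pkhat k (x / t)) / x ^ (k + 1)) (Ioi 0) :=
    ((hmax.div_const _).sub (by fun_prop)).contDiffOn.div (by fun_prop)
      fun x hx ↦ pow_ne_zero _ (mem_Ioi.1 hx).ne'
  refine hquot.congr fun x hx ↦ ?_
  have hx0 : x ≠ 0 := (mem_Ioi.1 hx).ne'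
  rw [← pow_succ_mul_Phi_eq_max_pow_sub hk hx0 ht, mul_div_cancel_left₀ _ (pow_ne_zero _ hx0)]

lemma iteratedDeriv_pow_succ_mul_Phi_of_lt (k p : ℕ) (hx : x ≠ 0) (ht : t ≠ 0) (hxt : x < t) :
    iteratedDeriv (2 * p + 1) (fun y ↦ y ^ (p + 1) * Phi k y t) x
      = -(t⁻¹ ^ (p + 1) * iteratedDeriv (2 * p + 1) (fun y ↦ y ^ p * Pk k y) (t⁻¹ * x)) := by
  have hlocal : (fun y ↦ y ^ (p + 1) * Phi k y t) =ᶠ[𝓝 x]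
      fun y ↦ (2 * k).choose k * y ^ p - t ^ p * ((t⁻¹ * y) ^ p * Pk k (t⁻¹ * y)) := by
    filter_upwards [eventually_ne_nhds hx, Iio_mem_nhds hxt] with y hy hyt
    rw [pow_succ_mul_Phi_of_lt k p hy hyt, mul_pow, inv_pow, inv_mul_eq_div t y]
    field_simp
  have hh : ContDiff ℝ (2 * p + 1 : ℕ) fun y ↦ y ^ p * Pk k y := by fun_prop
  rw [hlocal.iteratedDeriv_eq, iteratedDeriv_fun_sub (by fun_prop) (by fun_prop),
    iteratedDeriv_const_mul_field, iteratedDeriv_const_mul_field,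
    iteratedDeriv_comp_const_mul hh]
  simp only [iteratedDeriv_pow, Nat.descFactorial_eq_zero_iff_lt.2 (by omega : p < 2 * p + 1),
    Nat.cast_zero]
  have hcancel : t ^ p * t⁻¹ ^ p = 1 := by rw [← mul_pow, mul_inv_cancel₀ ht, one_pow]
  linear_combination
    (-(t⁻¹ ^ (p + 1) * iteratedDeriv (2 * p + 1) (fun y ↦ y ^ p * Pk k y) (t⁻¹ * x))) * hcancel

lemma iteratedDeriv_pow_succ_mul_Phi_of_gt (k p : ℕ) (hx : x ≠ 0) (ht : t ≠ 0) (htx : t < x) :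
    iteratedDeriv (2 * p + 1) (fun y ↦ y ^ (p + 1) * Phi k y t) x
      = -(t ^ (p + 1) * x⁻¹ ^ (2 * p + 2)
          * iteratedDeriv (2 * p + 1) (fun y ↦ y ^ p * Pk k y) (t * x⁻¹)) := by
  have hcancel : t ^ p * t⁻¹ ^ p = 1 := by rw [← mul_pow, mul_inv_cancel₀ ht, one_pow]
  have hlocal : (fun y ↦ y ^ (p + 1) * Phi k y t) =ᶠ[𝓝 x]
      fun y ↦ t⁻¹ ^ p * (y ^ (2 * p) * ((t * y⁻¹) ^ p * Pk k (t * y⁻¹))) := by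
    filter_upwards [eventually_ne_nhds hx, Ioi_mem_nhds htx] with y hy hty
    rw [pow_succ_mul_Phi_of_le k p hy (mem_Ioi.1 hty).le, ← div_eq_mul_inv t y, div_pow]
    field_simp
    linear_combination (-(y ^ (2 * p) * Pk k (t / y))) * hcancel
  have hh : ContDiff ℝ (2 * p + 1 : ℕ) fun y ↦ y ^ p * Pk k y := by fun_prop
  rw [hlocal.iteratedDeriv_eq, iteratedDeriv_const_mul_field,
    iteratedDeriv_succ_pow_mul_comp_inv (f := fun y ↦ (t * y) ^ p * Pk k (t * y)) hx
      (by fun_prop), iteratedDeriv_comp_const_mul hh, Odd.neg_one_pow ⟨p, rfl⟩]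
  linear_combination (-(t ^ (p + 1) * x⁻¹ ^ (2 * p + 2)
    * iteratedDeriv (2 * p + 1) (fun y ↦ y ^ p * Pk k y) (t * x⁻¹))) * hcancel

lemma neg_one_pow_mul_iteratedDeriv_pow_succ_mul_Phi_nonneg_of_ne {k p : ℕ} (hpk : p < k)
    (hx : 0 < x) (ht : 0 < t) (hxt : x ≠ t) :
    0 ≤ (-1) ^ p * iteratedDeriv (2 * p + 1) (fun y ↦ y ^ (p + 1) * Phi k y t) x := by
  rcases hxt.lt_or_gt with hxt | htx
  · have hscaled : t⁻¹ * x ≤ 1 := (inv_mul_le_one₀ ht).2 hxt.le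
    have hnonneg := neg_one_pow_mul_iteratedDeriv_pow_mul_Pk_nonneg hpk hscaled
    rw [iteratedDeriv_pow_succ_mul_Phi_of_lt k p hx.ne' ht.ne' hxt]
    have hfactor : 0 ≤ t⁻¹ ^ (p + 1) := by positivity
    exact (mul_nonneg hfactor hnonneg).trans_eq (by ring)
  · have hscaled : t * x⁻¹ ≤ 1 := (mul_inv_le_iff₀ hx).2 (by rw [one_mul]; exact htx.le)
    have hnonneg := neg_one_pow_mul_iteratedDeriv_pow_mul_Pk_nonneg hpk hscaled
    rw [iteratedDeriv_pow_succ_mul_Phi_of_gt k p hx.ne' ht.ne' htx]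
    have hfactor : 0 ≤ t ^ (p + 1) * x⁻¹ ^ (2 * p + 2) := by positivity
    exact (mul_nonneg hfactor hnonneg).trans_eq (by ring)

lemma continuousOn_iteratedDeriv_pow_succ_mul_Phi {k p : ℕ} (hpk : p < k) (ht : t ≠ 0) :
    ContinuousOn (iteratedDeriv (2 * p + 1) fun y ↦ y ^ (p + 1) * Phi k y t) (Ioi 0) := by
  have hsmooth : ContDiffOn ℝ (2 * k - 1 : ℕ) (fun y ↦ y ^ (p + 1) * Phi k y t) (Ioi 0) :=
    ContDiffOn.mul (by fun_prop) (contDiffOn_Phi (Nat.ne_zero_of_lt hpk) ht)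
  have hcont := hsmooth.continuousOn_iteratedDerivWithin (m := 2 * p + 1)
    (by norm_cast; omega) (uniqueDiffOn_Ioi 0)
  exact hcont.congr fun y hy ↦ (iteratedDerivWithin_of_isOpen isOpen_Ioi hy).symm

lemma neg_one_pow_mul_iteratedDeriv_pow_succ_mul_Phi_nonneg {k p : ℕ} (hpk : p < k) (hx : 0 < x)
    (ht : 0 < t) :
    0 ≤ (-1) ^ p * iteratedDeriv (2 * p + 1) (fun y ↦ y ^ (p + 1) * Phi k y t) x := by
  rcases eq_or_ne x t with rfl | hxt
  · have hcont := ((continuousOn_iteratedDeriv_pow_succ_mul_Phi hpk ht.ne').continuousAt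
      (Ioi_mem_nhds hx)).const_mul ((-1) ^ p)
    refine ge_of_tendsto (hcont.tendsto.mono_left (nhdsWithin_le_nhds (s := {x}ᶜ))) ?_
    filter_upwards [self_mem_nhdsWithin, nhdsWithin_le_nhds (Ioi_mem_nhds hx)] with y hyx hy
    exact neg_one_pow_mul_iteratedDeriv_pow_succ_mul_Phi_nonneg_of_ne hpk hy ht hyx
  · exact neg_one_pow_mul_iteratedDeriv_pow_succ_mul_Phi_nonneg_of_ne hpk hx ht hxt

lemma exists_polynomial_eval_eq_pow_mul_Pkhat_div (k : ℕ) (t : ℝ) :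
    ∃ p : ℝ[X], p.natDegree ≤ 2 * k ∧ ∀ x, p.eval x = x ^ k * Pkhat k (x / t) := by
  obtain ⟨p, hdeg, hp⟩ := exists_polynomial_eval_eq_Pk k
  refine ⟨X ^ k * (p - C ((2 * k).choose k : ℝ)).comp (C t⁻¹ * X), ?_, fun x ↦ ?_⟩
  · have hcomp : ((p - C ((2 * k).choose k : ℝ)).comp (C t⁻¹ * X)).natDegree ≤ k := by
      rw [natDegree_comp, natDegree_sub_C]
      exact (Nat.mul_le_mul hdeg
        ((natDegree_C_mul_le _ _).trans natDegree_X_le)).trans_eq (mul_one k)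
    exact natDegree_mul_le.trans
      ((add_le_add (natDegree_X_pow_le k) hcomp).trans_eq (two_mul k).symm)
  · simp [hp, Pkhat, inv_mul_eq_div]

lemma convexOn_neg_one_pow_mul_iteratedDeriv_pow_succ_mul_Phi {k : ℕ} (hk : k ≠ 0) (ht : 0 < t) :
    ConvexOn ℝ (Ioi 0) fun x ↦
      (-1) ^ k * iteratedDeriv (2 * k - 1) (fun y ↦ y ^ (k + 1) * Phi k y t) x := by
  obtain ⟨p, hdeg, hp⟩ := exists_polynomial_eval_eq_pow_mul_Pkhat_div k t
  have hsucc : 2 * k = (2 * k - 1) + 1 := by omega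
  have hpoly : ConvexOn ℝ univ (iteratedDeriv (2 * k - 1) fun x ↦ (C (-(-1) ^ k) * p).eval x) :=
    convexOn_iteratedDeriv_eval ((natDegree_C_mul_le _ _).trans (hdeg.trans hsucc.le))
  have htrunc := (convexOn_iteratedDeriv_max_sub_pow (2 * k - 1) t).smul
    (by positivity : 0 ≤ (t ^ k)⁻¹)
  refine ((htrunc.add hpoly).subset (subset_univ _) (convex_Ioi 0)).congr fun x hx ↦ ?_
  have hlocal : (fun y ↦ (-1) ^ k * (y ^ (k + 1) * Phi k y t)) =ᶠ[𝓝 x] fun y ↦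
      (t ^ k)⁻¹ * max (y - t) 0 ^ (2 * k - 1 + 1) + (C (-(-1) ^ k) * p).eval y := by
    filter_upwards [Ioi_mem_nhds hx] with y hy
    rw [pow_succ_mul_Phi_eq_max_pow_sub hk (mem_Ioi.1 hy).ne' ht.ne', eval_mul, eval_C,
      hp, ← hsucc, neg_pow t]
    field_simp
    ring
  have hsmooth : ContDiff ℝ (2 * k - 1 : ℕ) fun y ↦ (C (-(-1) ^ k) * p).eval y :=
    contDiff_aeval (𝕜 := ℝ) _ _
  rw [← iteratedDeriv_const_mul_field, hlocal.iteratedDeriv_eq,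
    iteratedDeriv_fun_add (contDiff_const.mul (contDiff_max_sub_pow_succ _ t)).contDiffAt
      hsmooth.contDiffAt, iteratedDeriv_const_mul_field]
  rfl

end Kernel

/-- Proposition 1: for every `k ≥ 1` and `t > 0`, the function
`x ↦ Φ_k(x,t)` belongs to `S_{k+1}`. -/
theorem phi_kernel_mem_stieltjesK (k : ℕ) (hk : 1 ≤ k) (t : ℝ) (ht : 0 < t) :
    ContDiffOn ℝ (2 * k - 1 : ℕ) (fun x => Phi k x t) (Ioi 0) ∧
    (∀ n, 1 ≤ n → n ≤ k → ∀ x > 0,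
      0 ≤ (-1 : ℝ) ^ (n - 1) *
        iteratedDeriv (2 * n - 1) (fun y => y ^ n * Phi k y t) x) ∧
    ConvexOn ℝ (Ioi 0)
      (fun x => (-1 : ℝ) ^ k *
        iteratedDeriv (2 * k - 1) (fun y => y ^ (k + 1) * Phi k y t) x) := by
  have hk0 : k ≠ 0 := Nat.one_le_iff_ne_zero.1 hk
  refine ⟨contDiffOn_Phi hk0 ht.ne', fun n hn hnk x hx ↦ ?_,
    convexOn_neg_one_pow_mul_iteratedDeriv_pow_succ_mul_Phi hk0 ht⟩
  obtain ⟨p, rfl⟩ := Nat.exists_eq_add_of_le' hn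
  exact neg_one_pow_mul_iteratedDeriv_pow_succ_mul_Phi_nonneg hnk hx ht
end

section
/- Let k ≥ 2 be an integer and let f : (0,∞) → [0,∞) be smooth with (−1)^{n−1} d^{2n−1}/dx^{2n−1} ( x^n f(x) ) ≥ 0 on (0,∞) for every n = 1,…,k. Set g(x) = x f(x) and φ(x) = x^{2k−1} g^{(k)}(x). Then: (i) (−1)^n g^{(n+1)}(x) ≥ 0 for all x > 0 and n = 0,…,k−1 (so g' is (k−1)-monotone on (0,∞)); (ii) lim_{x→0+} φ^{(j)}(x) = 0 for every j = 0,…,k−3; (iii) the limit lim_{x→0+} (−1)^{k−1} φ^{(k−2)}(x) exists and is nonnegative. -/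
open Set MeasureTheory Filter

/-!
By the first Widder condition `g = x f` is monotone, so it has a finite limit `c` at `0+`. With the
sign `(-1)^m` absorbed into `g`, the condition of order `m + 1` makes the `2m`-th derivative of
`F = x^m (g - c) = o(x^m)` monotone. The forward difference `Δ_x^{2m} F(x) = o(x^m)` equals
`x^{2m} F^{(2m)}(ξ)` for some `ξ` comparable to `x`, and monotonicity turns this into
`F^{(2m)}(x) = o(x^{-m})`. Descending through the lower derivatives by the mean value theorem gives
`x^j g^{(j)}(x) → 0` for `1 ≤ j ≤ 2m`. Hence the derivatives of order less than `m` of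
`φ = x^{2m+1} g^{(m+1)}` vanish at `0+`, and
`φ^{(m)} = x^{m+1} (x^m g)^{(2m+1)} ≥ 0` integrates up to `φ ≥ 0`, that is `g^{(m+1)} ≥ 0`.
-/

open Asymptotics
open scoped Topology fwdDiff

section IteratedDeriv

variable {𝕜 E : Type*} [NontriviallyNormedField 𝕜] [NormedAddCommGroup E] [NormedSpace 𝕜 E]

lemma iteratedDeriv_iteratedDeriv (m n : ℕ) (f : 𝕜 → E) :
    iteratedDeriv m (iteratedDeriv n f) = iteratedDeriv (m + n) f := by
  simp only [iteratedDeriv_eq_iterate, Function.iterate_add_apply]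

lemma contDiffOn_iteratedDeriv {f : 𝕜 → E} {s : Set 𝕜} {m n : ℕ}
    (hf : ContDiffOn 𝕜 (m + n : ℕ) f s) (hs : IsOpen s) :
    ContDiffOn 𝕜 m (iteratedDeriv n f) s := by
  induction n generalizing f with
  | zero => simpa using hf
  | succ n ih =>
    rw [iteratedDeriv_succ']
    exact ih (hf.deriv_of_isOpen hs (by norm_cast))

lemma hasDerivAt_iteratedDeriv_s4 {f : 𝕜 → E} {s : Set 𝕜} {m n : ℕ} (hf : ContDiffOn 𝕜 n f s)
    (hs : IsOpen s) (hmn : m < n) {x : 𝕜} (hx : x ∈ s) :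
    HasDerivAt (iteratedDeriv m f) (iteratedDeriv (m + 1) f x) x := by
  have hf' : ContDiffOn 𝕜 (1 + m : ℕ) f s := hf.of_le (by norm_cast; omega)
  rw [iteratedDeriv_succ]
  exact (((contDiffOn_iteratedDeriv hf' hs).contDiffAt (hs.mem_nhds hx)).differentiableAt
    (by simp)).hasDerivAt

/-- Both sides are `∑ l, C(m + n, l) m! / (m - l)! x ^ (m + n - l) f^{(m + n - l)}`. -/
lemma pow_mul_iteratedDeriv_pow_mul {f : 𝕜 → 𝕜} {s : Set 𝕜} {m n : ℕ}
    (hf : ContDiffOn 𝕜 (m + n : ℕ) f s) (hs : IsOpen s) {x : 𝕜} (hx : x ∈ s) :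
    x ^ n * iteratedDeriv (m + n) (fun y => y ^ m * f y) x =
      iteratedDeriv m (fun y => y ^ (m + n) * iteratedDeriv n f y) x := by
  have hfx : ContDiffAt 𝕜 (m + n : ℕ) f x := hf.contDiffAt (hs.mem_nhds hx)
  have hf'x : ContDiffAt 𝕜 m (iteratedDeriv n f) x :=
    (contDiffOn_iteratedDeriv hf hs).contDiffAt (hs.mem_nhds hx)
  rw [iteratedDeriv_fun_mul (by fun_prop) hfx, iteratedDeriv_fun_mul (by fun_prop) hf'x,
    Finset.mul_sum]
  simp only [iteratedDeriv_pow, iteratedDeriv_iteratedDeriv,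
    Nat.descFactorial_eq_factorial_mul_choose]
  have hsub : Finset.range (m + 1) ⊆ Finset.range (m + n + 1) :=
    Finset.range_subset_range.2 (by omega)
  rw [← Finset.sum_subset hsub]
  · refine Finset.sum_congr rfl fun l hl => ?_
    have hlm : l ≤ m := Nat.lt_succ_iff.1 (Finset.mem_range.1 hl)
    rw [show m - l + n = m + n - l by omega, show m + n - l = n + (m - l) by omega, pow_add]
    push_cast
    ring
  · intro l _ hl
    have hml : m < l := by simpa using hl
    simp [Nat.choose_eq_zero_of_lt hml]

lemma iteratedDeriv_pow_mul_const_add {f : 𝕜 → 𝕜} {x : 𝕜} {m n : ℕ} (hf : ContDiffAt 𝕜 n f x)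
    (hmn : m < n) (c : 𝕜) :
    iteratedDeriv n (fun y => y ^ m * (c + f y)) x = iteratedDeriv n (fun y => y ^ m * f y) x := by
  simp only [mul_add]
  rw [iteratedDeriv_fun_add (by fun_prop) (by fun_prop), iteratedDeriv_mul_const_field,
    iteratedDeriv_pow, Nat.descFactorial_eq_zero_iff_lt.2 hmn]
  simp

end IteratedDeriv

section Monotonicity

variable {f : ℝ → ℝ} {s : Set ℝ} {n : ℕ}

lemma monotoneOn_iteratedDeriv (hf : ContDiffOn ℝ (n + 1 : ℕ) f s) (hs : IsOpen s)
    (hs' : Convex ℝ s) (hnonneg : ∀ x ∈ s, 0 ≤ iteratedDeriv (n + 1) f x) :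
    MonotoneOn (iteratedDeriv n f) s := by
  have hderiv : ∀ x ∈ s, HasDerivAt (iteratedDeriv n f) (iteratedDeriv (n + 1) f x) x :=
    fun x hx => hasDerivAt_iteratedDeriv_s4 hf hs n.lt_succ_self hx
  refine monotoneOn_of_hasDerivWithinAt_nonneg hs' (f' := iteratedDeriv (n + 1) f)
    (fun x hx => (hderiv x hx).continuousAt.continuousWithinAt) ?_ ?_ <;> rw [hs.interior_eq]
  · exact fun x hx => (hderiv x hx).hasDerivWithinAt
  · exact hnonneg

lemma nonneg_of_iteratedDeriv_nonneg {a : ℝ} (hf : ContDiffOn ℝ n f (Ioi a))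
    (hlim : ∀ j < n, Tendsto (iteratedDeriv j f) (𝓝[>] a) (𝓝 0))
    (hnonneg : ∀ x > a, 0 ≤ iteratedDeriv n f x) : ∀ x > a, 0 ≤ f x := by
  induction n generalizing f with
  | zero => simpa using hnonneg
  | succ n ih =>
    have hderiv : ∀ x > a, 0 ≤ deriv f x := by
      refine ih (hf.deriv_of_isOpen isOpen_Ioi (by norm_cast)) (fun j hj => ?_) ?_ <;>
        rw [← iteratedDeriv_succ']
      · exact hlim (j + 1) (by omega)
      · exact hnonneg
    have hdiff : DifferentiableOn ℝ f (Ioi a) := hf.differentiableOn (by simp)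
    have hmono : MonotoneOn f (Ioi a) := monotoneOn_of_deriv_nonneg (convex_Ioi a)
      hdiff.continuousOn (by simpa using hdiff) (by simpa using hderiv)
    intro x hx
    refine le_of_tendsto (by simpa using hlim 0 n.succ_pos) ?_
    filter_upwards [Ioo_mem_nhdsGT hx] with y hy using hmono hy.1 hx hy.2.le

lemma exists_tendsto_nhdsGT_of_deriv_nonneg {a : ℝ} (hf : BddBelow (f '' Ioi a))
    (hdiff : DifferentiableOn ℝ f (Ioi a)) (hderiv : ∀ x > a, 0 ≤ deriv f x) :
    ∃ c, Tendsto f (𝓝[>] a) (𝓝 c) :=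
  ⟨_, (monotoneOn_of_deriv_nonneg (convex_Ioi a) hdiff.continuousOn (by simpa using hdiff)
    (by simpa using hderiv)).tendsto_nhdsGT hf⟩

end Monotonicity

section KMonotone

variable {g : ℝ → ℝ} {I : Set ℝ} {k n : ℕ}

lemma hasDerivAt_neg_one_pow_mul_iteratedDeriv (hg : ContDiffOn ℝ k g I) (hI : IsOpen I)
    (hn : n < k) {x : ℝ} (hx : x ∈ I) :
    HasDerivAt (fun y => (-1) ^ n * iteratedDeriv n g y)
      (-((-1) ^ (n + 1) * iteratedDeriv (n + 1) g x)) x :=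
  ((hasDerivAt_iteratedDeriv_s4 hg hI hn hx).const_mul ((-1 : ℝ) ^ n)).congr_deriv (by ring)

lemma antitoneOn_neg_one_pow_mul_iteratedDeriv (hg : ContDiffOn ℝ k g I) (hI : IsOpen I)
    (hI' : Convex ℝ I) (hn : n < k)
    (hnonneg : ∀ x ∈ I, 0 ≤ (-1) ^ (n + 1) * iteratedDeriv (n + 1) g x) :
    AntitoneOn (fun x => (-1) ^ n * iteratedDeriv n g x) I := by
  have hderiv := fun x hx => hasDerivAt_neg_one_pow_mul_iteratedDeriv hg hI hn (x := x) hx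
  exact antitoneOn_of_hasDerivWithinAt_nonpos hI'
    (fun x hx => (hderiv x hx).continuousAt.continuousWithinAt)
    (fun x hx => (hderiv x (interior_subset hx)).hasDerivWithinAt)
    (fun x hx => neg_nonpos.2 (hnonneg x (interior_subset hx)))

lemma convexOn_neg_one_pow_mul_iteratedDeriv (hg : ContDiffOn ℝ k g I) (hI : IsOpen I)
    (hI' : Convex ℝ I) (hn : n + 1 < k)
    (hnonneg : ∀ x ∈ I, 0 ≤ (-1) ^ (n + 2) * iteratedDeriv (n + 2) g x) :
    ConvexOn ℝ I (fun x => (-1) ^ n * iteratedDeriv n g x) := by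
  have hderiv := fun j (hj : j < k) x hx =>
    hasDerivAt_neg_one_pow_mul_iteratedDeriv hg hI hj (x := x) hx
  refine convexOn_of_hasDerivWithinAt2_nonneg hI'
    (fun x hx => (hderiv n (by omega) x hx).continuousAt.continuousWithinAt)
    (fun x hx => (hderiv n (by omega) x (interior_subset hx)).hasDerivWithinAt)
    (fun x hx => (hderiv (n + 1) hn x (interior_subset hx)).neg.hasDerivWithinAt)
    (fun x hx => ?_)
  simpa using hnonneg x (interior_subset hx)

lemma kMonotoneOn_of_iteratedDeriv (hk : 1 ≤ k) (hg : ContDiffOn ℝ k g I) (hI : IsOpen I)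
    (hI' : Convex ℝ I) (hnonneg : ∀ n ≤ k, ∀ x ∈ I, 0 ≤ (-1) ^ n * iteratedDeriv n g x) :
    KMonotoneOn k g I := by
  have hanti : ∀ n < k, AntitoneOn (fun x => (-1) ^ n * iteratedDeriv n g x) I := fun n hn =>
    antitoneOn_neg_one_pow_mul_iteratedDeriv hg hI hI' hn (hnonneg (n + 1) hn)
  unfold KMonotoneOn
  split_ifs with h1
  · exact ⟨by simpa using hnonneg 0 k.zero_le, by simpa using hanti 0 hk⟩
  · exact ⟨hg.of_le (by norm_cast; omega), fun n hn => ⟨hnonneg n (by omega), hanti n (by omega),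
      convexOn_neg_one_pow_mul_iteratedDeriv hg hI hI' (by omega) (hnonneg (n + 2) (by omega))⟩⟩

end KMonotone

section FwdDiff

variable {f f' : ℝ → ℝ} {n : ℕ} {a h : ℝ}

lemma hasDerivAt_fwdDiff_iter {x : ℝ}
    (hf : ∀ i ≤ n, HasDerivAt f (f' (x + i * h)) (x + i * h)) :
    HasDerivAt (Δ_[h] ^[n] f) (Δ_[h] ^[n] f' x) x := by
  simp only [funext (fwdDiff_iter_eq_sum_shift h f n), fwdDiff_iter_eq_sum_shift, nsmul_eq_mul,
    zsmul_eq_mul]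
  refine HasDerivAt.fun_sum fun i hi => ?_
  have hi' : i ≤ n := Nat.lt_succ_iff.1 (Finset.mem_range.1 hi)
  exact ((hf i hi').comp_add_const x (i * h)).const_mul _

lemma exists_fwdDiff_iter_eq_pow_mul_iteratedDeriv {s : Set ℝ} (hf : ContDiffOn ℝ n f s)
    (hs : IsOpen s) (hh : 0 < h) (hsub : Icc a (a + n * h) ⊆ s) :
    ∃ ξ ∈ Icc a (a + n * h), Δ_[h] ^[n] f a = h ^ n * iteratedDeriv n f ξ := by
  induction n generalizing f a with
  | zero => exact ⟨a, by simp, by simp⟩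
  | succ n ih =>
    push_cast at hsub ⊢
    have hderiv : ∀ x ∈ Icc a (a + h), HasDerivAt (Δ_[h] ^[n] f) (Δ_[h] ^[n] (deriv f) x) x := by
      refine fun x hx => hasDerivAt_fwdDiff_iter fun i hi => ?_
      have hi' : (i : ℝ) * h ≤ n * h := by gcongr
      have hmem : x + i * h ∈ s := hsub ⟨by linarith [hx.1, show 0 ≤ i * h by positivity],
        by linarith [hx.2]⟩
      exact ((hf.contDiffAt (hs.mem_nhds hmem)).differentiableAt (by simp)).hasDerivAt
    obtain ⟨ζ, hζ, hslope⟩ := exists_hasDerivAt_eq_slope _ _ (lt_add_of_pos_right a hh)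
      (fun x hx => (hderiv x hx).continuousAt.continuousWithinAt)
      (fun x hx => hderiv x (Ioo_subset_Icc_self hx))
    have hIcc : Icc ζ (ζ + n * h) ⊆ Icc a (a + (n + 1) * h) :=
      Icc_subset_Icc hζ.1.le (by linarith [hζ.2])
    obtain ⟨ξ, hξ, hξ'⟩ := ih (hf.deriv_of_isOpen hs (by norm_cast)) (hIcc.trans hsub)
    refine ⟨ξ, hIcc hξ, ?_⟩
    rw [add_sub_cancel_left, eq_div_iff hh.ne'] at hslope
    rw [Function.iterate_succ_apply', fwdDiff, ← hslope, hξ', iteratedDeriv_succ']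
    ring

end FwdDiff

section LittleO

variable {f u η : ℝ → ℝ} {p q : ℤ} {m n : ℕ} {a b : ℝ}

lemma zpow_le_add_zpow_of_mem_Icc {x : ℝ} (ha : 0 < a) (hx : x ∈ Icc a b) (q : ℤ) :
    x ^ q ≤ a ^ q + b ^ q := by
  have hx0 : 0 < x := ha.trans_le hx.1
  have hb : 0 < b := hx0.trans_le hx.2
  rcases le_total 0 q with hq | hq
  · exact (zpow_le_zpow_left₀ hq hx0.le hx.2).trans (le_add_of_nonneg_left (by positivity))
  · have hinv : (x ^ (-q))⁻¹ ≤ (a ^ (-q))⁻¹ :=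
      inv_anti₀ (by positivity) (zpow_le_zpow_left₀ (by omega) ha.le hx.1)
    simp only [zpow_neg, inv_inv] at hinv
    exact hinv.trans (le_add_of_nonneg_right (by positivity))

lemma isLittleO_zpow_comp_of_mem_Icc (ha : 0 < a) (hη : ∀ x > 0, η x ∈ Icc (a * x) (b * x))
    (hu : u =o[𝓝[>] 0] fun x => x ^ q) : (fun x => u (η x)) =o[𝓝[>] 0] fun x => x ^ q := by
  have htendsto : Tendsto η (𝓝[>] 0) (𝓝[>] 0) := by
    have hmul : ∀ c : ℝ, Tendsto (fun x => c * x) (𝓝[>] 0) (𝓝 0) := fun c => by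
      simpa using ((continuous_const_mul c).tendsto 0).mono_left nhdsWithin_le_nhds
    have hpos : ∀ᶠ x : ℝ in 𝓝[>] 0, 0 < x := self_mem_nhdsWithin
    refine tendsto_nhdsWithin_iff.2 ⟨tendsto_of_tendsto_of_tendsto_of_le_of_le' (hmul a) (hmul b)
      (hpos.mono fun x hx => (hη x hx).1) (hpos.mono fun x hx => (hη x hx).2), ?_⟩
    exact hpos.mono fun x hx => (mul_pos ha hx).trans_le (hη x hx).1
  refine (hu.comp_tendsto htendsto).trans_isBigO (IsBigO.of_bound (a ^ q + b ^ q) ?_)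
  filter_upwards [self_mem_nhdsWithin] with x (hx : 0 < x)
  have hmem : η x / x ∈ Icc a b := by
    rw [mem_Icc, le_div_iff₀ hx, div_le_iff₀ hx]
    exact hη x hx
  have hηx : 0 < η x := (mul_pos ha hx).trans_le (hη x hx).1
  rw [Function.comp_apply, Real.norm_of_nonneg (by positivity), Real.norm_of_nonneg (by positivity),
    ← div_le_iff₀ (by positivity), ← div_zpow]
  exact zpow_le_add_zpow_of_mem_Icc ha hmem q

lemma isLittleO_zpow_mul (hu : u =o[𝓝[>] 0] fun x => x ^ q) (p : ℤ) :
    (fun x => x ^ p * u x) =o[𝓝[>] 0] fun x => x ^ (p + q) := by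
  refine ((isBigO_refl (fun x : ℝ => x ^ p) _).mul_isLittleO hu).congr' .rfl ?_
  filter_upwards [self_mem_nhdsWithin] with x (hx : 0 < x) using (zpow_add₀ hx.ne' p q).symm

lemma isLittleO_fwdDiff_iter (hf : f =o[𝓝[>] 0] fun x => x ^ p) (n : ℕ) :
    (fun x => Δ_[x] ^[n] f x) =o[𝓝[>] 0] fun x => x ^ p := by
  simp only [fwdDiff_iter_eq_sum_shift, zsmul_eq_mul]
  refine IsLittleO.fun_sum fun i _ => IsLittleO.const_mul_left ?_ _
  refine isLittleO_zpow_comp_of_mem_Icc (a := 1) (b := i + 1) one_pos (fun x hx => ?_) hf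
  rw [nsmul_eq_mul, mem_Icc]
  constructor <;> nlinarith [show (0 : ℝ) ≤ i * x by positivity]

lemma exists_iteratedDeriv_comp_isLittleO (hf : ContDiffOn ℝ n f (Ioi 0))
    (hfo : f =o[𝓝[>] 0] fun x => x ^ p) :
    ∃ ξ : ℝ → ℝ, (∀ x > (0 : ℝ), ξ x ∈ Icc x ((n + 1) * x)) ∧
      (fun x => iteratedDeriv n f (ξ x)) =o[𝓝[>] 0] fun x => x ^ (p - n) := by
  have hmean : ∀ x > (0 : ℝ), ∃ ξ ∈ Icc x ((n + 1) * x),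
      Δ_[x] ^[n] f x = x ^ n * iteratedDeriv n f ξ := fun x hx => by
    rw [show (n + 1) * x = x + n * x by ring]
    exact exists_fwdDiff_iter_eq_pow_mul_iteratedDeriv hf isOpen_Ioi hx
      fun y hy => hx.trans_le hy.1
  choose! ξ hξ hξ' using hmean
  refine ⟨ξ, hξ, ?_⟩
  refine (isLittleO_zpow_mul (isLittleO_fwdDiff_iter hfo n) (-n)).congr' ?_ (by
    simp only [neg_add_eq_sub]; rfl)
  filter_upwards [self_mem_nhdsWithin] with x (hx : 0 < x)
  rw [hξ' x hx, zpow_neg, zpow_natCast, inv_mul_cancel_left₀ (by positivity)]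

lemma isLittleO_iteratedDeriv_of_monotoneOn (hf : ContDiffOn ℝ n f (Ioi 0))
    (hfo : f =o[𝓝[>] 0] fun x => x ^ p) (hmono : MonotoneOn (iteratedDeriv n f) (Ioi 0)) :
    iteratedDeriv n f =o[𝓝[>] 0] fun x => x ^ (p - n) := by
  obtain ⟨ξ, hξ, hξo⟩ := exists_iteratedDeriv_comp_isLittleO hf hfo
  have hn : 0 < ((n : ℝ) + 1)⁻¹ := by positivity
  have hξo' : (fun x => iteratedDeriv n f (ξ (((n : ℝ) + 1)⁻¹ * x))) =o[𝓝[>] 0]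
      fun x => x ^ (p - n) :=
    isLittleO_zpow_comp_of_mem_Icc (η := fun x => ((n : ℝ) + 1)⁻¹ * x) hn
      (fun x _ => left_mem_Icc.2 le_rfl) hξo
  refine IsBigO.trans_isLittleO (IsBigO.of_bound 1 ?_) (hξo'.norm_left.add hξo.norm_left)
  filter_upwards [self_mem_nhdsWithin] with x (hx : 0 < x)
  have hx' : 0 < ((n : ℝ) + 1)⁻¹ * x := by positivity
  have hlow := hξ _ hx'
  rw [mul_inv_cancel_left₀ (by positivity)] at hlow
  have hle₁ := hmono (hx'.trans_le hlow.1) hx hlow.2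
  have hle₂ := hmono hx (hx.trans_le (hξ x hx).1) (hξ x hx).1
  rw [one_mul, Real.norm_of_nonneg (add_nonneg (norm_nonneg _) (norm_nonneg _))]
  exact (abs_le_max_abs_abs hle₁ hle₂).trans (max_le_add_of_nonneg (abs_nonneg _) (abs_nonneg _))

lemma isLittleO_iteratedDeriv_of_succ (hf : ContDiffOn ℝ (n + 1 : ℕ) f (Ioi 0))
    (hfo : f =o[𝓝[>] 0] fun x => x ^ p)
    (hsucc : iteratedDeriv (n + 1) f =o[𝓝[>] 0] fun x => x ^ (p - (n + 1 : ℕ))) :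
    iteratedDeriv n f =o[𝓝[>] 0] fun x => x ^ (p - n) := by
  obtain ⟨ξ, hξ, hξo⟩ :=
    exists_iteratedDeriv_comp_isLittleO (n := n) (hf.of_le (by norm_cast; omega)) hfo
  have hmean : ∀ x > (0 : ℝ), ∃ ζ ∈ Icc x ((n + 1) * x),
      iteratedDeriv n f (ξ x) - iteratedDeriv n f x = (ξ x - x) * iteratedDeriv (n + 1) f ζ := by
    intro x hx
    rcases (hξ x hx).1.eq_or_lt with heq | hlt
    · exact ⟨ξ x, hξ x hx, by simp [← heq]⟩
    have hderiv : ∀ y ∈ Icc x (ξ x),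
        HasDerivAt (iteratedDeriv n f) (iteratedDeriv (n + 1) f y) y := fun y hy =>
      hasDerivAt_iteratedDeriv_s4 hf isOpen_Ioi n.lt_succ_self (hx.trans_le hy.1)
    obtain ⟨ζ, hζ, hslope⟩ := exists_hasDerivAt_eq_slope _ _ hlt
      (fun y hy => (hderiv y hy).continuousAt.continuousWithinAt)
      (fun y hy => hderiv y (Ioo_subset_Icc_self hy))
    refine ⟨ζ, ⟨hζ.1.le, hζ.2.le.trans (hξ x hx).2⟩, ?_⟩
    rw [hslope, mul_div_cancel₀ _ (sub_ne_zero.2 hlt.ne')]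
  choose! ζ hζ hζ' using hmean
  have hζo : (fun x => iteratedDeriv (n + 1) f (ζ x)) =o[𝓝[>] 0]
      fun x => x ^ (p - (n + 1 : ℕ)) :=
    isLittleO_zpow_comp_of_mem_Icc one_pos (by simpa using hζ) hsucc
  have hincr : (fun x => (ξ x - x) * iteratedDeriv (n + 1) f (ζ x)) =o[𝓝[>] 0]
      fun x => x ^ (p - n) := by
    have hexp : (1 : ℤ) + (p - (n + 1 : ℕ)) = p - n := by push_cast; ring
    rw [← hexp]
    refine IsBigO.trans_isLittleO (IsBigO.mul ?_ (isBigO_refl _ _)) (isLittleO_zpow_mul hζo 1)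
    refine IsBigO.of_bound n ?_
    filter_upwards [self_mem_nhdsWithin] with x (hx : 0 < x)
    rw [zpow_one, Real.norm_of_nonneg hx.le, Real.norm_of_nonneg (sub_nonneg.2 (hξ x hx).1)]
    linarith [(hξ x hx).2]
  refine (hξo.sub hincr).congr' ?_ .rfl
  filter_upwards [self_mem_nhdsWithin] with x (hx : 0 < x)
  rw [← hζ' x hx, sub_sub_cancel]

/-- `f` vanishes to order `p` at `0+` stably under `n` differentiations: `f^{(j)}(x) = o(x^{p-j})`
as `x → 0+` for `j ≤ n`. The order is an integer so that multiplication by powers of `x` of either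
sign is allowed. -/
def IsLittleOWithDerivs (p : ℤ) (n : ℕ) (f : ℝ → ℝ) : Prop :=
  ∀ j ≤ n, iteratedDeriv j f =o[𝓝[>] 0] fun x => x ^ (p - j)

lemma isLittleOWithDerivs_of_monotoneOn (hf : ContDiffOn ℝ n f (Ioi 0))
    (hfo : f =o[𝓝[>] 0] fun x => x ^ p) (hmono : MonotoneOn (iteratedDeriv n f) (Ioi 0)) :
    IsLittleOWithDerivs p n f := by
  intro j hj
  induction hj using Nat.decreasingInduction with
  | self => exact isLittleO_iteratedDeriv_of_monotoneOn hf hfo hmono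
  | of_succ j hj ih =>
    exact isLittleO_iteratedDeriv_of_succ (hf.of_le (by norm_cast)) hfo ih

namespace IsLittleOWithDerivs

lemma congr {g : ℝ → ℝ} (hf : IsLittleOWithDerivs p n f) (hfg : EqOn f g (Ioi 0)) :
    IsLittleOWithDerivs p n g := fun j hj =>
  (hf j hj).congr' ((hfg.iteratedDeriv_of_isOpen isOpen_Ioi j).eventuallyEq_of_mem
    self_mem_nhdsWithin) .rfl

protected lemma iteratedDeriv (hf : IsLittleOWithDerivs p (m + n) f) :
    IsLittleOWithDerivs (p - n) m (iteratedDeriv n f) := by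
  intro j hj
  rw [iteratedDeriv_iteratedDeriv, show p - n - j = p - (j + n : ℕ) by push_cast; ring]
  exact hf (j + n) (by omega)

lemma zpow_mul (hf : IsLittleOWithDerivs p n f) (hf' : ContDiffOn ℝ n f (Ioi 0)) (q : ℤ) :
    IsLittleOWithDerivs (q + p) n (fun x => x ^ q * f x) := by
  intro j hj
  have hleibniz : (fun x => ∑ l ∈ Finset.range (j + 1),
      (j.choose l * ∏ i ∈ Finset.range l, ((q : ℝ) - i)) *
        (x ^ (q - l) * iteratedDeriv (j - l) f x)) =ᶠ[𝓝[>] 0]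
      iteratedDeriv j (fun x => x ^ q * f x) := by
    filter_upwards [self_mem_nhdsWithin] with x (hx : 0 < x)
    have hpow : ContDiffAt ℝ j (fun y : ℝ => y ^ q) x :=
      (analyticAt_id.zpow hx.ne').contDiffAt
    rw [iteratedDeriv_fun_mul hpow
      ((hf'.contDiffAt (Ioi_mem_nhds hx)).of_le (by exact_mod_cast hj))]
    simp only [iteratedDeriv_eq_iterate, iter_deriv_zpow]
    exact Finset.sum_congr rfl fun l _ => by ring
  refine IsLittleO.congr' (IsLittleO.fun_sum fun l hl => ?_) hleibniz .rfl
  have hlj : l ≤ j := Nat.lt_succ_iff.1 (Finset.mem_range.1 hl)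
  have hexp : q + p - j = q - l + (p - (j - l : ℕ)) := by push_cast [hlj]; ring
  rw [hexp]
  exact (isLittleO_zpow_mul (hf (j - l) (by omega)) _).const_mul_left _

lemma tendsto_iteratedDeriv {j : ℕ} (hf : IsLittleOWithDerivs p n f) (hj : j ≤ n) (hjp : j ≤ p) :
    Tendsto (iteratedDeriv j f) (𝓝[>] 0) (𝓝 0) := by
  obtain ⟨d, hd⟩ := Int.eq_ofNat_of_zero_le (sub_nonneg.2 hjp)
  have hbounded : (fun x : ℝ => x ^ (p - j)) =O[𝓝[>] 0] (fun _ => (1 : ℝ)) := by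
    simp only [hd, zpow_natCast]
    exact ((continuous_pow d).tendsto 0).isBigO_one ℝ |>.mono nhdsWithin_le_nhds
  exact (isLittleO_one_iff ℝ).1 ((hf j hj).trans_isBigO hbounded)

end IsLittleOWithDerivs

end LittleO

section BoundaryBehaviour

variable {g : ℝ → ℝ} {c : ℝ} {m r : ℕ}

lemma isLittleOWithDerivs_neg_add_of_tendsto (hg : ContDiffOn ℝ (m + r + 1 : ℕ) g (Ioi 0))
    (hlim : Tendsto g (𝓝[>] 0) (𝓝 c))
    (hnonneg : ∀ x > 0, 0 ≤ iteratedDeriv (m + r + 1) (fun y => y ^ m * g y) x) :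
    IsLittleOWithDerivs 0 (m + r) (fun x => -c + g x) := by
  have hsub : ContDiffOn ℝ (m + r + 1 : ℕ) (fun x => -c + g x) (Ioi 0) := contDiffOn_const.add hg
  have hcd : ContDiffOn ℝ (m + r + 1 : ℕ) (fun x => x ^ m * (-c + g x)) (Ioi 0) :=
    ContDiffOn.mul (by fun_prop) hsub
  have hzero : Tendsto (fun x => -c + g x) (𝓝[>] 0) (𝓝 0) := by simpa using hlim.const_add (-c)
  have hfo : (fun x => x ^ m * (-c + g x)) =o[𝓝[>] 0] fun x => x ^ (m : ℤ) := by
    have hone : (fun x => -c + g x) =o[𝓝[>] 0] fun x => x ^ (0 : ℤ) := by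
      simpa only [zpow_zero] using (isLittleO_one_iff ℝ).2 hzero
    simpa only [zpow_natCast, add_zero] using isLittleO_zpow_mul hone m
  have hnonneg' : ∀ x > 0, 0 ≤ iteratedDeriv (m + r + 1) (fun y => y ^ m * (-c + g y)) x := by
    intro x hx
    rw [iteratedDeriv_pow_mul_const_add (hg.contDiffAt (Ioi_mem_nhds hx)) (by omega)]
    exact hnonneg x hx
  have hF := isLittleOWithDerivs_of_monotoneOn (hcd.of_le (by norm_cast; omega)) hfo
    (monotoneOn_iteratedDeriv hcd isOpen_Ioi (convex_Ioi 0) hnonneg')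
  rw [← neg_add_cancel (m : ℤ)]
  refine (hF.zpow_mul (hcd.of_le (by norm_cast; omega)) (-m)).congr fun x (hx : 0 < x) => ?_
  simp only [zpow_neg, zpow_natCast]
  exact inv_mul_cancel_left₀ (by positivity) _

lemma tendsto_iteratedDeriv_pow_mul_iteratedDeriv
    (hg : ContDiffOn ℝ (m + r + 1 : ℕ) g (Ioi 0)) (hlim : Tendsto g (𝓝[>] 0) (𝓝 c))
    (hnonneg : ∀ x > 0, 0 ≤ iteratedDeriv (m + r + 1) (fun y => y ^ m * g y) x)
    {i : ℕ} (hi : i < m) :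
    Tendsto (iteratedDeriv i (fun x => x ^ (m + r + 1) * iteratedDeriv (r + 1) g x))
      (𝓝[>] 0) (𝓝 0) := by
  obtain ⟨m, rfl⟩ := Nat.exists_eq_add_one_of_ne_zero (by omega : m ≠ 0)
  have hderiv : IsLittleOWithDerivs (0 - (r + 1 : ℕ)) m (iteratedDeriv (r + 1) g) := by
    rw [← funext fun x => iteratedDeriv_const_add r.succ_pos (-c) (f := g) (x := x)]
    refine IsLittleOWithDerivs.iteratedDeriv ?_
    rw [show m + (r + 1) = m + 1 + r by ring]
    exact isLittleOWithDerivs_neg_add_of_tendsto hg hlim hnonneg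
  have hcd : ContDiffOn ℝ m (iteratedDeriv (r + 1) g) (Ioi 0) :=
    contDiffOn_iteratedDeriv (hg.of_le (by norm_cast; omega)) isOpen_Ioi
  have hφ := hderiv.zpow_mul hcd (m + 1 + r + 1 : ℕ)
  simp only [zpow_natCast] at hφ
  exact hφ.tendsto_iteratedDeriv (by omega) (by push_cast; omega)

lemma iteratedDeriv_nonneg_of_iteratedDeriv_pow_mul_nonneg
    (hg : ContDiffOn ℝ (m + r + 1 : ℕ) g (Ioi 0)) (hlim : Tendsto g (𝓝[>] 0) (𝓝 c))
    (hnonneg : ∀ x > 0, 0 ≤ iteratedDeriv (m + r + 1) (fun y => y ^ m * g y) x) :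
    ∀ x > 0, 0 ≤ iteratedDeriv (r + 1) g x := by
  have hcd : ContDiffOn ℝ m (iteratedDeriv (r + 1) g) (Ioi 0) :=
    contDiffOn_iteratedDeriv hg isOpen_Ioi
  have hφ : ∀ x > 0, 0 ≤ x ^ (m + r + 1) * iteratedDeriv (r + 1) g x := by
    refine nonneg_of_iteratedDeriv_nonneg (n := m) (ContDiffOn.mul (by fun_prop) hcd)
      (fun j hj => tendsto_iteratedDeriv_pow_mul_iteratedDeriv hg hlim hnonneg hj) fun x hx => ?_
    rw [add_assoc m, ← pow_mul_iteratedDeriv_pow_mul (n := r + 1) hg isOpen_Ioi hx]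
    exact mul_nonneg (pow_pos hx _).le (hnonneg x hx)
  exact fun x hx => nonneg_of_mul_nonneg_right (hφ x hx) (pow_pos hx _)

end BoundaryBehaviour

lemma widder_nonneg_iff {f : ℝ → ℝ} {m : ℕ} {x : ℝ} :
    0 ≤ (-1 : ℝ) ^ m * iteratedDeriv (2 * (m + 1) - 1) (fun y => y ^ (m + 1) * f y) x ↔
      0 ≤ iteratedDeriv (m + m + 1) (fun y => y ^ m * ((-1) ^ m * (y * f y))) x := by
  rw [← iteratedDeriv_const_mul_field, show 2 * (m + 1) - 1 = m + m + 1 by omega]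
  ring_nf

theorem stieltjesK_boundary_behaviour_general (k : ℕ) (hk : 2 ≤ k) (f : ℝ → ℝ)
    (hf : BddBelow ((fun x => x * f x) '' Ioi 0))
    (hsmooth : ContDiffOn ℝ (2 * k - 1 : ℕ) f (Ioi 0))
    (hW : ∀ n, 1 ≤ n → n ≤ k → ∀ x > 0,
      0 ≤ (-1 : ℝ) ^ (n - 1) * iteratedDeriv (2 * n - 1) (fun y => y ^ n * f y) x) :
    (∀ n ≤ k - 1, ∀ x > 0,
      0 ≤ (-1 : ℝ) ^ n * iteratedDeriv (n + 1) (fun y => y * f y) x) ∧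
    KMonotoneOn (k - 1) (fun x => deriv (fun y => y * f y) x) (Ioi 0) ∧
    ∀ j, j + 2 ≤ k →
      Tendsto
        (iteratedDeriv j (fun y => y ^ (2 * k - 1) * iteratedDeriv k (fun z => z * f z) y))
        (𝓝[>] 0) (𝓝 0) := by
  have hg : ContDiffOn ℝ (2 * k - 1 : ℕ) (fun y => y * f y) (Ioi 0) := contDiffOn_id.mul hsmooth
  have hgn : ∀ n < k, ContDiffOn ℝ (n + n + 1 : ℕ) (fun y => (-1) ^ n * (y * f y)) (Ioi 0) :=
    fun n hn => contDiffOn_const.mul (hg.of_le (by norm_cast; omega))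
  have hWn : ∀ n < k, ∀ x > 0,
      0 ≤ iteratedDeriv (n + n + 1) (fun y => y ^ n * ((-1) ^ n * (y * f y))) x :=
    fun n hn x hx => widder_nonneg_iff.1 (hW (n + 1) (by omega) hn x hx)
  obtain ⟨c, hc⟩ : ∃ c, Tendsto (fun x => x * f x) (𝓝[>] 0) (𝓝 c) :=
    exists_tendsto_nhdsGT_of_deriv_nonneg hf (hg.differentiableOn (by norm_cast; omega))
      fun x hx => by simpa using hW 1 le_rfl (by omega) x hx
  have hnonneg : ∀ n < k, ∀ x > 0, 0 ≤ (-1 : ℝ) ^ n * iteratedDeriv (n + 1) (fun y => y * f y) x :=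
    fun n hn x hx => by
      rw [← iteratedDeriv_const_mul_field]
      exact iteratedDeriv_nonneg_of_iteratedDeriv_pow_mul_nonneg (hgn n hn) (hc.const_mul _)
        (hWn n hn) x hx
  refine ⟨fun n hn => hnonneg n (by omega), ?_, fun j hj => ?_⟩
  · refine kMonotoneOn_of_iteratedDeriv (by omega)
      (hg.deriv_of_isOpen isOpen_Ioi (by norm_cast; omega)) isOpen_Ioi (convex_Ioi 0)
      fun n hn x hx => ?_
    rw [← iteratedDeriv_succ']
    exact hnonneg n (by omega) x hx
  · obtain ⟨n, rfl⟩ := Nat.exists_eq_add_one_of_ne_zero (by omega : k ≠ 0)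
    have hφ := tendsto_iteratedDeriv_pow_mul_iteratedDeriv (hgn n n.lt_succ_self) (hc.const_mul _)
      (hWn n n.lt_succ_self) (by omega : j < n)
    rw [show 2 * (n + 1) - 1 = n + n + 1 by omega]
    simp only [iteratedDeriv_const_mul_field, mul_left_comm _ ((-1 : ℝ) ^ n)] at hφ
    have hφ' := (hφ.congr fun x => iteratedDeriv_const_mul_field _ _).const_mul ((-1 : ℝ) ^ n)
    simpa [← mul_assoc, ← mul_pow] using hφ'

/-- Proposition 2: if `f` is smooth on `(0,∞)`, nonnegative, and satisfies
the Widder conditions up to order `k`, then with `g = x f` and `φ = x^{2k-1} g^{(k)}`: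
(i) `(-1)^n g^{(n+1)} ≥ 0` for `n = 0, …, k-1` (so `g'` is `(k-1)`-monotone);
(ii) `φ^{(j)}(0+) = 0` for `j = 0, …, k-3`;
(iii) `(-1)^{k-1} φ^{(k-2)}(0+)` exists and is nonnegative. -/
theorem stieltjesK_boundary_behaviour (k : ℕ) (hk : 2 ≤ k) (f : ℝ → ℝ)
    (hf : ∀ x > 0, 0 ≤ f x) (hsmooth : ContDiffOn ℝ (⊤ : ℕ∞) f (Ioi 0))
    (hW : ∀ n, 1 ≤ n → n ≤ k → ∀ x > 0,
      0 ≤ (-1 : ℝ) ^ (n - 1) * iteratedDeriv (2 * n - 1) (fun y => y ^ n * f y) x) :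
    (∀ n ≤ k - 1, ∀ x > 0,
      0 ≤ (-1 : ℝ) ^ n * iteratedDeriv (n + 1) (fun y => y * f y) x) ∧
    KMonotoneOn (k - 1) (fun x => deriv (fun y => y * f y) x) (Ioi 0) ∧
    (∀ j, j + 3 ≤ k →
      Tendsto
        (fun x => iteratedDeriv j
          (fun y => y ^ (2 * k - 1) * iteratedDeriv k (fun z => z * f z) y) x)
        (nhdsWithin 0 (Ioi 0)) (nhds 0)) ∧
    (∃ L : ℝ, 0 ≤ L ∧
      Tendsto
        (fun x => (-1 : ℝ) ^ (k - 1) * iteratedDeriv (k - 2)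
          (fun y => y ^ (2 * k - 1) * iteratedDeriv k (fun z => z * f z) y) x)
        (nhdsWithin 0 (Ioi 0)) (nhds L)) := by
  obtain ⟨hnonneg, hmono, hlim⟩ := stieltjesK_boundary_behaviour_general k hk f
    ⟨0, forall_mem_image.2 fun x hx => mul_nonneg (le_of_lt hx) (hf x hx)⟩
    (contDiffOn_infty.1 hsmooth _) hW
  exact ⟨hnonneg, hmono, fun j hj => hlim j (by omega), 0, le_rfl,
    by simpa using (hlim (k - 2) (by omega)).const_mul ((-1) ^ (k - 1))⟩
end
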